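/- arXiv:2203.01258 — 2 statements merged into one kernel-verified Lean document; each statement's English description precedes it below -/
import Mathlib

section
/- The codimension three Gorenstein sequences of Sperner number (maximum value) at most six are exactly: (1,3^k,1), (1,3,4^k,3,1), (1,3,4,5^k,4,3,1), (1,3,4,5,6^k,5,4,3,1), (1,3,5^k,3,1), (1,3,5,6^k,5,3,1), and (1,3,6^k,3,1), where k ≥ 1 and exponents denote repetition. -/
/- Common background: standard graded Artinian (Gorenstein) quotients of a
polynomial ring, their graded pieces, Hilbert function, socle degree,
Lefschetz-type conditions, and Macaulay contraction duality. -/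

noncomputable section
open MvPolynomial
open scoped Classical

variable {K : Type*} [Field K] {n : ℕ}

/-- The degree-`i` graded component of `R/I`: the image in the quotient of the
homogeneous polynomials of degree `i`. -/
def gradedPiece (I : Ideal (MvPolynomial (Fin n) K)) (i : ℕ) :
    Submodule K (MvPolynomial (Fin n) K ⧸ I) :=
  (homogeneousSubmodule (Fin n) K i).map (Ideal.Quotient.mkₐ K I).toLinearMap

/-- The Hilbert function of `R/I`. -/
def hilbFn (I : Ideal (MvPolynomial (Fin n) K)) (i : ℕ) : ℕ :=
  Module.finrank K (gradedPiece I i)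

/-- `I` is a homogeneous ideal. -/
def IsHomogIdeal (I : Ideal (MvPolynomial (Fin n) K)) : Prop :=
  ∀ p ∈ I, ∀ i, homogeneousComponent i p ∈ I

/-- The socle of `R/I`: elements killed by every variable. -/
def socleSub (I : Ideal (MvPolynomial (Fin n) K)) :
    Submodule K (MvPolynomial (Fin n) K ⧸ I) :=
  ⨅ v : Fin n, LinearMap.ker (LinearMap.mulLeft K (Ideal.Quotient.mk I (X v)))

/-- `R/I` is a standard graded Artinian Gorenstein algebra. -/
def IsAG (I : Ideal (MvPolynomial (Fin n) K)) : Prop :=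
  IsHomogIdeal I ∧ I ≠ ⊤ ∧ FiniteDimensional K (MvPolynomial (Fin n) K ⧸ I) ∧
    Module.finrank K (socleSub I) = 1

/-- The socle degree: the top degree with nonzero component. -/
def socDeg (I : Ideal (MvPolynomial (Fin n) K)) : ℕ :=
  sSup {i | hilbFn I i ≠ 0}

/-- Multiplication by `ℓ ^ d` maps `A_u` bijectively onto `A_v`. -/
def PowMulBij (I : Ideal (MvPolynomial (Fin n) K)) (ℓ : MvPolynomial (Fin n) K ⧸ I)
    (d u v : ℕ) : Prop :=
  (∀ a ∈ gradedPiece I u, ℓ ^ d * a = 0 → a = 0) ∧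
  (∀ b ∈ gradedPiece I v, ∃ a ∈ gradedPiece I u, ℓ ^ d * a = b)

/-- `(A, ℓ)` is a strong Lefschetz pair: `ℓ^(j-2i) : A_i → A_(j-i)` is bijective
for all `0 ≤ i ≤ ⌊j/2⌋`, `j` the socle degree. -/
def SLPair (I : Ideal (MvPolynomial (Fin n) K)) (ℓ : MvPolynomial (Fin n) K ⧸ I) : Prop :=
  ∀ i, 2 * i ≤ socDeg I → PowMulBij I ℓ (socDeg I - 2 * i) i (socDeg I - i)

/-- `A = R/I` has the strong Lefschetz property. -/
def StrongLefschetz (I : Ideal (MvPolynomial (Fin n) K)) : Prop :=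
  ∃ ℓ ∈ gradedPiece I 1, SLPair I ℓ

/-- Contraction of `F` by the monomial `x^d`. -/
def contractMon (d : Fin n →₀ ℕ) (F : MvPolynomial (Fin n) K) : MvPolynomial (Fin n) K :=
  ∑ e ∈ F.support, if d ≤ e then monomial (e - d) (coeff e F) else 0

/-- Contraction action of a polynomial `p` on `F` (Macaulay duality pairing). -/
def contract (p F : MvPolynomial (Fin n) K) : MvPolynomial (Fin n) K :=
  ∑ d ∈ p.support, coeff d p • contractMon d F

/-- The sequence whose values are read off a finite list (zero beyond). -/
def listSeq (L : List ℕ) : ℕ → ℕ := fun i => L.getD i 0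

/-- The sequence `(a, mid^k, b)`: prefix `a`, the value `mid` repeated `k` times,
then suffix `b`, and zero afterwards. -/
def repSeq (a : List ℕ) (mid k : ℕ) (b : List ℕ) : ℕ → ℕ :=
  listSeq (a ++ List.replicate k mid ++ b)

theorem repSeq_of_lt (a b : List ℕ) (mid k i : ℕ) (hi : i < a.length) :
    repSeq a mid k b i = a.getD i 0 := by
  simp [repSeq, listSeq, List.getD_eq_getElem?_getD, List.getElem?_append, hi]

theorem repSeq_of_lt_add (a b : List ℕ) (mid k i : ℕ) (hi : a.length ≤ i) (hi' : i < a.length + k) :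
    repSeq a mid k b i = mid := by
  simp [repSeq, listSeq, List.getD_eq_getElem?_getD, List.getElem?_append,
    show ¬ i < a.length by omega, show i - a.length < k by omega]

theorem repSeq_add (a b : List ℕ) (mid k i : ℕ) :
    repSeq a mid k b (a.length + k + i) = b.getD i 0 := by
  simp [repSeq, listSeq, List.getD_eq_getElem?_getD, List.getElem?_append,
    show ¬ a.length + k + i < a.length by omega, show ¬ a.length + k + i - a.length < k by omega,
    show a.length + k + i - a.length - k = i by omega]

theorem eq_repSeq_iff (T : ℕ → ℕ) (a b : List ℕ) (mid k : ℕ) :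
    (∀ i, T i = repSeq a mid k b i) ↔ (∀ i < a.length, T i = a.getD i 0) ∧
      (∀ i, a.length ≤ i → i < a.length + k → T i = mid) ∧
      ∀ i, T (a.length + k + i) = b.getD i 0 := by
  constructor
  · intro h
    refine ⟨fun i hi => ?_, fun i hi hi' => ?_, fun i => ?_⟩
    · rw [h, repSeq_of_lt _ _ _ _ _ hi]
    · rw [h, repSeq_of_lt_add _ _ _ _ _ hi hi']
    · rw [h, repSeq_add]
  · rintro ⟨h1, h2, h3⟩ i
    by_cases hi : i < a.length
    · rw [h1 i hi, repSeq_of_lt _ _ _ _ _ hi]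
    · by_cases hi' : i < a.length + k
      · rw [h2 i (by omega) hi', repSeq_of_lt_add _ _ _ _ _ (by omega) hi']
      · obtain ⟨e, rfl⟩ := Nat.exists_eq_add_of_le (not_lt.mp hi')
        rw [h3, repSeq_add]

/-- A sequence symmetric about `j / 2` that is constant on `[m, j - m]` is `repSeq` of its
initial values. -/
theorem eq_repSeq_of_symmetric (T : ℕ → ℕ) (j : ℕ) (a : List ℕ) (mid : ℕ)
    (hz : ∀ i, j < i → T i = 0) (hs : ∀ i ≤ j, T i = T (j - i)) (hj : 2 * a.length ≤ j)
    (ha : ∀ i < a.length, T i = a.getD i 0)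
    (hmid : ∀ i, a.length ≤ i → 2 * i ≤ j → T i = mid) :
    ∀ i, T i = repSeq a mid (j + 1 - 2 * a.length) a.reverse i := by
  rw [eq_repSeq_iff]
  refine ⟨ha, fun i hi hi' => ?_, fun i => ?_⟩
  · by_cases h : 2 * i ≤ j
    · exact hmid i hi h
    · rw [hs i (by omega)]
      exact hmid _ (by omega) (by omega)
  · by_cases h : i < a.length
    · rw [hs _ (by omega), ha _ (by omega)]
      simp only [List.getD_eq_getElem?_getD, List.getElem?_reverse h]
      congr 2
      omega
    · rw [hz _ (by omega)]
      simp [List.getD_eq_getElem?_getD, show a.length ≤ i by omega]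

/-- The shapes of the codimension three Gorenstein sequences of Sperner number at most six. -/
def HasSmallShape (T : ℕ → ℕ) : Prop :=
  ∃ k : ℕ, 1 ≤ k ∧
      ((∀ i, T i = repSeq [1] 3 k [1] i) ∨
       (∀ i, T i = repSeq [1, 3] 4 k [3, 1] i) ∨
       (∀ i, T i = repSeq [1, 3, 4] 5 k [4, 3, 1] i) ∨
       (∀ i, T i = repSeq [1, 3, 4, 5] 6 k [5, 4, 3, 1] i) ∨
       (∀ i, T i = repSeq [1, 3] 5 k [3, 1] i) ∨
       (∀ i, T i = repSeq [1, 3, 5] 6 k [5, 3, 1] i) ∨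
       (∀ i, T i = repSeq [1, 3] 6 k [3, 1] i))

/-- The numerical data attached to a Gorenstein algebra with Hilbert function `T` of socle degree
`j` and a nonzero linear form `x`: the Hilbert function `g` of the quotient by `x`, and the
dimensions `p` of the spaces of multiples of `x`. -/
structure LinearSection (j : ℕ) (T g p : ℕ → ℕ) : Prop where
  zero_of_lt : ∀ i, j < i → T i = 0
  symm : ∀ i ≤ j, T i = T (j - i)
  p_symm : ∀ i < j, p i = p (j - 1 - i)
  p_pos : ∀ i < j, 1 ≤ p i
  p_le_one : ∀ i, 1 ≤ i → p i ≤ 1 → p (i + 1) ≤ 1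
  succ_eq : ∀ i, T (i + 1) = g (i + 1) + p i
  T_zero : T 0 = 1
  g_zero : g 0 = 1
  g_le : ∀ i, g i ≤ i + 1
  g_succ_le : ∀ i, g i ≤ i → g (i + 1) ≤ g i

namespace LinearSection

variable {j : ℕ} {T g p : ℕ → ℕ}

theorem diff_eq (H : LinearSection j T g p) {i : ℕ} (hi : i < j) :
    T (i + 1) + g (j - i) = T i + g (i + 1) := by
  have h1 := H.succ_eq i
  have h2 := H.succ_eq (j - 1 - i)
  rw [show j - 1 - i + 1 = j - i by omega, ← H.symm i hi.le, ← H.p_symm i hi] at h2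
  omega

theorem g_antitone (H : LinearSection j T g p) {s : ℕ} (hs : g (s + 1) ≤ s + 1)
    (hs' : g s = s + 1) {a b : ℕ} (ha : s ≤ a) (hab : a ≤ b) : g b ≤ g a := by
  have key : ∀ i, s ≤ i → g (i + 1) ≤ g i ∧ g (i + 1) ≤ i + 1 := by
    intro i hi
    induction i, hi using Nat.le_induction with
    | base => omega
    | succ i hi ih => have := H.g_succ_le (i + 1) ih.2; omega
  induction b, hab using Nat.le_induction with
  | base => exact le_rfl
  | succ b hb ih => exact (key b (by omega)).1.trans ih

theorem exists_break (H : LinearSection j T g p) {B : ℕ} (hB : ∀ i, g i ≤ B) :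
    ∃ s < B, (∀ i ≤ s, g i = i + 1) ∧ g (s + 1) ≤ s + 1 := by
  have hex : ∃ i, g (i + 1) ≤ i + 1 := ⟨B, (hB _).trans (by omega)⟩
  have h1 : ∀ i ≤ Nat.find hex, g i = i + 1 := by
    intro i hi
    cases i with
    | zero => exact H.g_zero
    | succ i =>
      have h2 := Nat.find_min hex (m := i) (by omega)
      have h3 := H.g_le (i + 1)
      omega
  refine ⟨Nat.find hex, ?_, h1, Nat.find_spec hex⟩
  have := h1 _ le_rfl
  have := hB (Nat.find hex)
  omega

/-- Past the break, up to the middle, the first differences are nonnegative and nonincreasing;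
so at each point either the sequence has become constant, or it strictly increases. -/
theorem flat_or_increase (H : LinearSection j T g p) {s : ℕ} (hs : g (s + 1) ≤ s + 1)
    (hs' : g s = s + 1) {m : ℕ} (hm : s ≤ m + 1) (hmj : 2 * m ≤ j) :
    (∀ i, m ≤ i → 2 * i ≤ j → T i = T m) ∨ (2 * (m + 1) ≤ j ∧ T m + 1 ≤ T (m + 1) ∧
      (2 * (m + 2) ≤ j → T (m + 1) ≤ T (m + 2) ∧ T (m + 2) + T m ≤ 2 * T (m + 1))) := by
  have hanti := fun {a b : ℕ} => H.g_antitone hs hs' (a := a) (b := b)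
  by_cases h : 2 * (m + 1) ≤ j ∧ T m + 1 ≤ T (m + 1)
  · refine Or.inr ⟨h.1, h.2, fun h2 => ?_⟩
    have d1 := H.diff_eq (i := m) (by omega)
    have d2 := H.diff_eq (i := m + 1) (by omega)
    have a1 := hanti (a := m + 1) (b := m + 2) (by omega) (by omega)
    have a2 := hanti (a := j - (m + 1)) (b := j - m) (by omega) (by omega)
    have a3 := hanti (a := m + 2) (b := j - (m + 1)) (by omega) (by omega)
    constructor
    · simp only [Nat.add_assoc, Nat.reduceAdd] at *; omega
    · simp only [Nat.add_assoc, Nat.reduceAdd] at *; omega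
  · refine Or.inl fun i hi => ?_
    induction i, hi using Nat.le_induction with
    | base => exact fun _ => rfl
    | succ i hi ih =>
      intro h2
      have ih := ih (by omega)
      have d1 := H.diff_eq (i := m) (by omega)
      have d2 := H.diff_eq (i := i) (by omega)
      have a1 := hanti (a := m + 1) (b := i + 1) (by omega) (by omega)
      have a2 := hanti (a := j - i) (b := j - m) (by omega) (by omega)
      have a3 := hanti (a := i + 1) (b := j - i) (by omega) (by omega)
      omega

theorem p_eq_one (H : LinearSection j T g p) {i : ℕ} (hi : 1 ≤ i) (h : p i ≤ 1)
    {k : ℕ} (hk : k < j) (hk0 : i ≤ k ∨ i ≤ j - 1 - k) : p k = 1 := by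
  have key : ∀ l, i ≤ l → p l ≤ 1 := by
    intro l hl
    induction l, hl using Nat.le_induction with
    | base => exact h
    | succ l hl ih => exact H.p_le_one l (by omega) ih
  have := H.p_pos k hk
  rcases hk0 with h' | h'
  · have := key k h'; omega
  · have := key _ h'
    have := H.p_symm k hk
    omega

theorem classify (H : LinearSection j T g p) (h3 : T 1 = 3) (h6 : ∀ i, T i ≤ 6) :
    HasSmallShape T := by
  have hj : 2 ≤ j := by
    by_contra hj
    have h1 := H.zero_of_lt 1
    have h2 := H.symm 1
    have h0 := H.T_zero
    interval_cases j <;> simp_all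
  have hflat : ∀ m, 2 * m ≤ j → (∀ i, m ≤ i → 2 * i ≤ j → T i = T m) →
      (m = 1 ∨ m = 2 ∧ 4 ≤ T 2 ∨ m = 3 ∧ (T 2 = 4 ∧ T 3 = 5 ∨ T 2 = 5 ∧ T 3 = 6) ∨
        m = 4 ∧ T 2 = 4 ∧ T 3 = 5 ∧ T 4 = 6) → HasSmallShape T := by
    intro m hm hconst hcase
    refine ⟨j + 1 - 2 * m, by omega, ?_⟩
    have key : ∀ (a : List ℕ) (mid : ℕ), a.length = m → (∀ i < a.length, T i = a.getD i 0) →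
        T m = mid → ∀ i, T i = repSeq a mid (j + 1 - 2 * m) a.reverse i := by
      rintro a mid rfl ha hmid
      exact eq_repSeq_of_symmetric T j a mid H.zero_of_lt H.symm hm ha
        fun i h1 h2 => (hconst i h1 h2).trans hmid
    have h0 := H.T_zero
    have h62 := h6 2
    rcases hcase with rfl | ⟨rfl, h⟩ | ⟨rfl, h | h⟩ | ⟨rfl, h⟩
    · exact Or.inl (key [1] 3 rfl (by simp [h0]) h3)
    · have hpre : ∀ i < 2, T i = [1, 3].getD i 0 := by
        intro i hi; interval_cases i <;> simp [h0, h3]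
      rcases (show T 2 = 4 ∨ T 2 = 5 ∨ T 2 = 6 by omega) with h | h | h
      · exact Or.inr (Or.inl (key [1, 3] 4 rfl hpre h))
      · exact Or.inr (Or.inr (Or.inr (Or.inr (Or.inl (key [1, 3] 5 rfl hpre h)))))
      · exact Or.inr (Or.inr (Or.inr (Or.inr (Or.inr (Or.inr (key [1, 3] 6 rfl hpre h))))))
    · refine Or.inr (Or.inr (Or.inl (key [1, 3, 4] 5 rfl ?_ h.2)))
      intro i hi
      simp only [List.length_cons, List.length_nil] at hi
      interval_cases i <;> simp [h0, h3, h.1]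
    · refine Or.inr (Or.inr (Or.inr (Or.inr (Or.inr (Or.inl (key [1, 3, 5] 6 rfl ?_ h.2))))))
      intro i hi
      simp only [List.length_cons, List.length_nil] at hi
      interval_cases i <;> simp [h0, h3, h.1]
    · refine Or.inr (Or.inr (Or.inr (Or.inl (key [1, 3, 4, 5] 6 rfl ?_ h.2.2))))
      intro i hi
      simp only [List.length_cons, List.length_nil] at hi
      interval_cases i <;> simp [h0, h3, h.1, h.2.1]
  have hTj : T j = 1 := by rw [H.symm j le_rfl, Nat.sub_self, H.T_zero]
  have hp0 : p 0 = 1 := by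
    have h1 := H.succ_eq (j - 1)
    rw [show j - 1 + 1 = j by omega, hTj] at h1
    have h2 := H.p_symm 0 (by omega)
    have h3 := H.p_pos 0 (by omega)
    simp only [Nat.sub_zero] at h2
    omega
  have hg1 : g 1 = 2 := by have := H.succ_eq 0; simp only [Nat.zero_add] at this; omega
  obtain ⟨s, hs5, hseq, hs⟩ := H.exists_break (B := 5) (by
    intro i
    cases i with
    | zero => have := H.g_zero; omega
    | succ i =>
      have h1 := H.succ_eq i
      have h2 := h6 (i + 1)
      by_cases hi : i < j
      · have := H.p_pos i hi; omega
      · have := H.zero_of_lt (i + 1) (by omega); omega)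
  have hs' := hseq s le_rfl
  have e1 := H.succ_eq 1
  have e2 := H.succ_eq 2
  have e3 := H.succ_eq 3
  simp only [Nat.reduceAdd] at e1 e2 e3
  have b2 := h6 2
  have b3 := h6 3
  have b4 := h6 4
  have b5 := h6 5
  have step := fun (m : ℕ) (h1 : s ≤ m + 1) (h2 : 2 * m ≤ j) => H.flat_or_increase hs hs' h1 h2
  have hs0 : s ≠ 0 := by rintro rfl; simp only [Nat.zero_add] at hs; omega
  have hT3 : 3 ≤ s → 5 ≤ j ∧ 5 ≤ T 3 ∧ 4 ≤ T 2 := by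
    intro h
    have g2 := hseq 2 (by omega)
    have g3 := hseq 3 h
    have j3 : 3 ≤ j := by
      by_contra hlt
      have := H.zero_of_lt 3 (by omega); omega
    have := H.p_pos 2 (by omega)
    have := H.p_pos 1 (by omega)
    refine ⟨?_, by omega, by omega⟩
    by_contra hlt
    have hsym := H.symm 3 (by omega)
    obtain rfl | rfl : j = 3 ∨ j = 4 := by omega
    · simp only [Nat.sub_self] at hsym; omega
    · simp only [Nat.reduceSub] at hsym; omega
  have from4 : 8 ≤ j → T 2 = 4 → T 3 = 5 → T 4 = 6 → HasSmallShape T := fun h1 h2 h3 h4 => by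
    rcases step 4 (by omega) (by omega) with h | ⟨-, h, -⟩
    · exact hflat 4 (by omega) h (by omega)
    · simp only [Nat.reduceAdd] at h; omega
  have from3 : 6 ≤ j → s ≤ 3 → (T 2 = 4 ∧ T 3 = 5 ∨ T 2 = 5 ∧ T 3 = 6) →
      HasSmallShape T := fun h1 hs3 h2 => by
    rcases step 3 (by omega) (by omega) with h | ⟨h, h', -⟩
    · exact hflat 3 (by omega) h (by omega)
    · simp only [Nat.reduceAdd] at h'
      exact from4 (by omega) (by omega) (by omega) (by omega)
  obtain hs2 | rfl | rfl : s ≤ 2 ∨ s = 3 ∨ s = 4 := by omega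
  · rcases step 1 (by omega) (by omega) with h | ⟨h, h', h''⟩
    · exact hflat 1 (by omega) h (by omega)
    · simp only [Nat.reduceAdd] at h' h''
      rcases step 2 (by omega) (by omega) with k | ⟨k, k', -⟩
      · exact hflat 2 (by omega) k (by omega)
      · simp only [Nat.reduceAdd] at k'
        have := h'' k
        exact from3 (by omega) (by omega) (by omega)
  · obtain ⟨j5, T3, T2⟩ := hT3 le_rfl
    rcases step 2 (by omega) (by omega) with k | ⟨k, k', -⟩
    · exact hflat 2 (by omega) k (by omega)
    · simp only [Nat.reduceAdd] at k'
      have g2 := hseq 2 (by omega)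
      have g3 := hseq 3 (by omega)
      have q1 := H.p_eq_one (i := 2) (k := 1) (by omega)
      have q2 := H.p_le_one 1 le_rfl
      simp only [Nat.reduceAdd] at q2
      exact from3 (by omega) (by omega) (by omega)
  · obtain ⟨j5, T3, T2⟩ := hT3 (by omega)
    have g2 := hseq 2 (by omega)
    have g3 := hseq 3 (by omega)
    have g4 := hseq 4 (by omega)
    have j6 : 6 ≤ j := by
      by_contra hlt
      have hsym := H.symm 4 (by omega)
      obtain rfl : j = 5 := by omega
      simp only [Nat.reduceSub] at hsym; omega
    have p3 := H.p_pos 3 (by omega)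
    have p1 := H.p_eq_one (i := 3) (k := 1) (by omega) (by omega) (by omega)
    have p2 := H.p_eq_one (i := 3) (k := 2) (by omega) (by omega) (by omega)
    have j8 : 8 ≤ j := by
      by_contra hlt
      have hsym := H.symm 4 (by omega)
      obtain rfl | rfl : j = 6 ∨ j = 7 := by omega
      · simp only [Nat.reduceSub] at hsym; omega
      · simp only [Nat.reduceSub] at hsym; omega
    exact from4 j8 (by omega) (by omega) (by omega)

end LinearSection

section Pairing

variable {V W V₁ V₂ V₃ : Type*} [AddCommGroup V] [Module K V] [AddCommGroup W] [Module K W]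
  [AddCommGroup V₁] [Module K V₁] [AddCommGroup V₂] [Module K V₂] [AddCommGroup V₃] [Module K V₃]

theorem finrank_range_eq_of_ker_eq (f : V₁ →ₗ[K] V₂) (g : V₁ →ₗ[K] V₃)
    (h : LinearMap.ker f = LinearMap.ker g) :
    Module.finrank K (LinearMap.range f) = Module.finrank K (LinearMap.range g) := by
  rw [← f.quotKerEquivRange.finrank_eq, h, g.quotKerEquivRange.finrank_eq]

theorem finrank_range_flip [FiniteDimensional K V] [FiniteDimensional K W]
    (B : V →ₗ[K] W →ₗ[K] K) :
    Module.finrank K (LinearMap.range B.flip) = Module.finrank K (LinearMap.range B) := by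
  have h : B.flip = (B.dualMap : Module.Dual K (Module.Dual K W) →ₗ[K] Module.Dual K V) ∘ₗ
      (Module.evalEquiv K W).toLinearMap := by
    ext w v; simp
  rw [h, LinearMap.range_comp_of_range_eq_top _ (LinearEquiv.range _)]
  exact LinearMap.finrank_range_dualMap_eq_finrank_range (V₂ := Module.Dual K W) B

end Pairing

instance finiteDimensional_homogeneousSubmodule (i : ℕ) :
    FiniteDimensional K (homogeneousSubmodule (Fin n) K i) :=
  Module.Finite.iff_fg.mpr (homogeneousSubmodule_fg (Fin n) K i)

theorem homogeneousComponent_mul_of_isHomogeneous {p : MvPolynomial (Fin n) K} {i : ℕ}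
    (hp : p.IsHomogeneous i) (q : MvPolynomial (Fin n) K) (k : ℕ) :
    homogeneousComponent (i + k) (p * q) = p * homogeneousComponent k q := by
  conv_lhs => rw [← sum_homogeneousComponent q, Finset.mul_sum, map_sum]
  rw [Finset.sum_congr rfl fun l _ => homogeneousComponent_of_mem
    (hp.mul (homogeneousComponent_isHomogeneous l q))]
  simp only [add_right_inj]
  rw [Finset.sum_ite_eq]
  split_ifs with h
  · rfl
  · rw [homogeneousComponent_eq_zero _ _ (by simpa using h), mul_zero]

theorem homogeneousComponent_mul_of_lt {p : MvPolynomial (Fin n) K} {i : ℕ}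
    (hp : p.IsHomogeneous i) (q : MvPolynomial (Fin n) K) {k : ℕ} (hk : k < i) :
    homogeneousComponent k (p * q) = 0 := by
  conv_lhs => rw [← sum_homogeneousComponent q, Finset.mul_sum, map_sum]
  refine Finset.sum_eq_zero fun l _ => ?_
  rw [homogeneousComponent_of_mem (hp.mul (homogeneousComponent_isHomogeneous l q)),
    if_neg (by omega)]

/-- A subspace containing all products of a variable with a form of degree `i` contains all forms
of degree `i + 1`. -/
theorem homogeneousSubmodule_succ_le {i : ℕ} {W : Submodule K (MvPolynomial (Fin n) K)}
    (h : ∀ v, ∀ q : MvPolynomial (Fin n) K, q.IsHomogeneous i → X v * q ∈ W) :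
    homogeneousSubmodule (Fin n) K (i + 1) ≤ W := by
  intro p hp
  rw [p.as_sum]
  refine Submodule.sum_mem _ fun d hd => ?_
  have hdeg : d.degree = i + 1 := by
    by_contra hne
    exact (mem_support_iff.mp hd) (IsHomogeneous.coeff_eq_zero hp hne)
  obtain ⟨v, hv⟩ : ∃ v, d v ≠ 0 := by
    by_contra hne
    push Not at hne
    have : d = 0 := Finsupp.ext hne
    simp [this] at hdeg
  have hle : Finsupp.single v 1 ≤ d := by
    simpa [Finsupp.single_le_iff] using Nat.one_le_iff_ne_zero.mpr hv
  have hsplit : monomial d (coeff d p) =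
      X v * monomial (d - Finsupp.single v 1) (coeff d p) := by
    rw [X, monomial_mul, one_mul, add_tsub_cancel_of_le hle]
  rw [hsplit]
  refine h v _ (isHomogeneous_monomial _ ?_)
  have h1 : (Finsupp.single v 1 + (d - Finsupp.single v 1)).degree = i + 1 := by
    rw [add_tsub_cancel_of_le hle, hdeg]
  rw [map_add, Finsupp.degree_single] at h1
  omega

/-- The largest ideal contained in the kernel of a linear functional. -/
def annIdeal (φ : MvPolynomial (Fin n) K →ₗ[K] K) : Ideal (MvPolynomial (Fin n) K) where
  carrier := {p | ∀ q, φ (p * q) = 0}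
  zero_mem' := by simp
  add_mem' := by
    intro a b ha hb q
    rw [add_mul, map_add, ha, hb, add_zero]
  smul_mem' := by
    intro c p hp q
    rw [smul_eq_mul, mul_comm c p, mul_assoc, hp]

/-- The functional `φ` vanishes on all forms of degree different from `j`. -/
def ConcentratedIn (φ : MvPolynomial (Fin n) K →ₗ[K] K) (j : ℕ) : Prop :=
  ∀ p, φ (homogeneousComponent j p) = φ p

namespace ConcentratedIn

variable {φ : MvPolynomial (Fin n) K →ₗ[K] K} {j : ℕ}

theorem eq_zero (h : ConcentratedIn φ j) {p : MvPolynomial (Fin n) K} {i : ℕ}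
    (hp : p.IsHomogeneous i) (hij : i ≠ j) : φ p = 0 := by
  rw [← h, homogeneousComponent_of_mem hp, if_neg hij.symm, map_zero]

theorem mul_eq_zero (h : ConcentratedIn φ j) {p : MvPolynomial (Fin n) K} {i : ℕ}
    (hp : p.IsHomogeneous i) (q : MvPolynomial (Fin n) K) (hij : j < i) : φ (p * q) = 0 := by
  rw [← h, homogeneousComponent_mul_of_lt hp q hij, map_zero]

theorem mul_component (h : ConcentratedIn φ j) {p : MvPolynomial (Fin n) K} {i k : ℕ}
    (hp : p.IsHomogeneous i) (q : MvPolynomial (Fin n) K) (hij : i + k = j) :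
    φ (p * homogeneousComponent k q) = φ (p * q) := by
  rw [← h (p * q), ← hij, homogeneousComponent_mul_of_isHomogeneous hp]

theorem mem_annIdeal_of_lt (h : ConcentratedIn φ j) {p : MvPolynomial (Fin n) K} {i : ℕ}
    (hp : p.IsHomogeneous i) (hij : j < i) : p ∈ annIdeal φ :=
  fun q => h.mul_eq_zero hp q hij

theorem mem_annIdeal_iff (h : ConcentratedIn φ j) {p : MvPolynomial (Fin n) K} {i k : ℕ}
    (hp : p.IsHomogeneous i) (hij : i + k = j) :
    p ∈ annIdeal φ ↔ ∀ q : MvPolynomial (Fin n) K, q.IsHomogeneous k → φ (p * q) = 0 := by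
  refine ⟨fun hI q _ => hI q, fun hk q => ?_⟩
  rw [← h.mul_component hp q hij]
  exact hk _ (homogeneousComponent_isHomogeneous _ _)

theorem isHomogIdeal (h : ConcentratedIn φ j) : IsHomogIdeal (annIdeal φ) := by
  intro p hp i
  have hi := homogeneousComponent_isHomogeneous i p
  by_cases hij : j < i
  · exact h.mem_annIdeal_of_lt hi hij
  · rw [h.mem_annIdeal_iff hi (k := j - i) (by omega)]
    intro q hq
    rw [mul_comm, h.mul_component hq p (by omega), mul_comm]
    exact hp q

end ConcentratedIn

/-- The image in `R/I` of the multiples by `w` of the forms of degree `i`. -/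
def multPiece (I : Ideal (MvPolynomial (Fin n) K)) (w : MvPolynomial (Fin n) K) (i : ℕ) :
    Submodule K (MvPolynomial (Fin n) K ⧸ I) :=
  (homogeneousSubmodule (Fin n) K i).map
    ((Ideal.Quotient.mkₐ K I).toLinearMap ∘ₗ LinearMap.mulLeft K w)

theorem gradedPiece_eq_multPiece (I : Ideal (MvPolynomial (Fin n) K)) (i : ℕ) :
    gradedPiece I i = multPiece I 1 i := by
  rw [gradedPiece, multPiece]
  congr 1
  ext; simp

instance (I : Ideal (MvPolynomial (Fin n) K)) (w : MvPolynomial (Fin n) K) (i : ℕ) :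
    FiniteDimensional K (multPiece I w i) := by
  unfold multPiece; infer_instance

instance (I : Ideal (MvPolynomial (Fin n) K)) (i : ℕ) :
    FiniteDimensional K (gradedPiece I i) := by
  unfold gradedPiece; infer_instance

/-- The pairing `(p, q) ↦ φ (w p q)` on forms of degrees `i` and `k`. -/
def formPairing (φ : MvPolynomial (Fin n) K →ₗ[K] K) (w : MvPolynomial (Fin n) K) (i k : ℕ) :
    homogeneousSubmodule (Fin n) K i →ₗ[K] homogeneousSubmodule (Fin n) K k →ₗ[K] K :=
  ((LinearMap.mul K (MvPolynomial (Fin n) K)).compr₂ (φ ∘ₗ LinearMap.mulLeft K w)).domRestrict₁₂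
    _ _

@[simp] theorem formPairing_apply (φ : MvPolynomial (Fin n) K →ₗ[K] K)
    (w : MvPolynomial (Fin n) K) (i k : ℕ) (p : homogeneousSubmodule (Fin n) K i)
    (q : homogeneousSubmodule (Fin n) K k) :
    formPairing φ w i k p q = φ (w * (p * q)) := rfl

theorem formPairing_flip (φ : MvPolynomial (Fin n) K →ₗ[K] K) (w : MvPolynomial (Fin n) K)
    (i k : ℕ) : (formPairing φ w i k).flip = formPairing φ w k i := by
  apply LinearMap.ext; intro p
  apply LinearMap.ext; intro q
  simp [mul_comm]

namespace ConcentratedIn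

variable {φ : MvPolynomial (Fin n) K →ₗ[K] K} {j : ℕ}

theorem finrank_multPiece (h : ConcentratedIn φ j) {w : MvPolynomial (Fin n) K} {d i k : ℕ}
    (hw : w.IsHomogeneous d) (hj : d + i + k = j) :
    Module.finrank K (multPiece (annIdeal φ) w i) =
      Module.finrank K (LinearMap.range (formPairing φ w i k)) := by
  have h1 : multPiece (annIdeal φ) w i = LinearMap.range
      (((Ideal.Quotient.mkₐ K (annIdeal φ)).toLinearMap ∘ₗ LinearMap.mulLeft K w) ∘ₗ
        (homogeneousSubmodule (Fin n) K i).subtype) := by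
    rw [LinearMap.range_comp, Submodule.range_subtype, multPiece]
  rw [h1]
  apply finrank_range_eq_of_ker_eq
  ext ⟨p, hp⟩
  have hwp : (w * p).IsHomogeneous (d + i) := hw.mul hp
  simp only [LinearMap.mem_ker, LinearMap.comp_apply, Submodule.subtype_apply,
    LinearMap.mulLeft_apply, AlgHom.toLinearMap_apply, Ideal.Quotient.mkₐ_eq_mk,
    Ideal.Quotient.eq_zero_iff_mem, h.mem_annIdeal_iff hwp hj, LinearMap.ext_iff,
    formPairing_apply, LinearMap.zero_apply, Subtype.forall, mem_homogeneousSubmodule, mul_assoc]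

theorem finrank_multPiece_symm (h : ConcentratedIn φ j) {w : MvPolynomial (Fin n) K} {d i k : ℕ}
    (hw : w.IsHomogeneous d) (hj : d + i + k = j) :
    Module.finrank K (multPiece (annIdeal φ) w i) =
      Module.finrank K (multPiece (annIdeal φ) w k) := by
  rw [h.finrank_multPiece hw hj, h.finrank_multPiece hw (show d + k + i = j by omega),
    ← formPairing_flip, finrank_range_flip]

theorem hilbFn_symm (h : ConcentratedIn φ j) {i : ℕ} (hj : i ≤ j) :
    hilbFn (annIdeal φ) i = hilbFn (annIdeal φ) (j - i) := by
  rw [hilbFn, hilbFn, gradedPiece_eq_multPiece, gradedPiece_eq_multPiece]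
  exact h.finrank_multPiece_symm (isHomogeneous_one _ _) (by omega)

theorem hilbFn_of_lt (h : ConcentratedIn φ j) {i : ℕ} (hj : j < i) :
    hilbFn (annIdeal φ) i = 0 := by
  rw [hilbFn, Submodule.finrank_eq_zero, eq_bot_iff]
  rintro _ ⟨p, hp, rfl⟩
  exact (Submodule.mem_bot K).mpr (Ideal.Quotient.eq_zero_iff_mem.mpr
    (h.mem_annIdeal_of_lt hp hj))

end ConcentratedIn

theorem hilbFn_zero {J : Ideal (MvPolynomial (Fin n) K)} (h : J ≠ ⊤) :
    hilbFn J 0 = 1 := by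
  have h1 : gradedPiece J 0 = Submodule.span K {1} := by
    rw [gradedPiece, homogeneousSubmodule_zero, Submodule.one_eq_span, Submodule.map_span,
      Set.image_singleton]
    simp
  rw [hilbFn, h1]
  apply finrank_span_singleton
  rw [← map_one (Ideal.Quotient.mk J), Ne, Ideal.Quotient.eq_zero_iff_mem]
  exact fun h2 => h ((Ideal.eq_top_iff_one _).mpr h2)

section MultPiece

variable {I : Ideal (MvPolynomial (Fin n) K)} {w : MvPolynomial (Fin n) K}

theorem mem_multPiece {i : ℕ} {p : MvPolynomial (Fin n) K} (hp : p.IsHomogeneous i) :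
    Ideal.Quotient.mk I (w * p) ∈ multPiece I w i :=
  Submodule.mem_map_of_mem (f := (Ideal.Quotient.mkₐ K I).toLinearMap ∘ₗ LinearMap.mulLeft K w) hp

theorem multPiece_succ_le {i : ℕ} {W : Submodule K (MvPolynomial (Fin n) K ⧸ I)}
    (h : ∀ v, ∀ q : MvPolynomial (Fin n) K, q.IsHomogeneous i →
      Ideal.Quotient.mk I (w * (X v * q)) ∈ W) : multPiece I w (i + 1) ≤ W := by
  rw [multPiece, Submodule.map_le_iff_le_comap]
  exact homogeneousSubmodule_succ_le h

theorem multPiece_succ_eq_bot {i : ℕ} (h : multPiece I w i = ⊥) : multPiece I w (i + 1) = ⊥ := by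
  rw [eq_bot_iff]
  refine multPiece_succ_le fun v q hq => ?_
  have h1 := mem_multPiece (I := I) (w := w) hq
  rw [h, Submodule.mem_bot] at h1
  rw [Submodule.mem_bot, mul_left_comm, map_mul, h1, mul_zero]

theorem finrank_multPiece_succ_le_one {i : ℕ}
    (h : Module.finrank K (multPiece I w (i + 1)) ≤ 1) :
    Module.finrank K (multPiece I w (i + 2)) ≤ 1 := by
  by_cases hbot : multPiece I w (i + 1) = ⊥
  · rw [multPiece_succ_eq_bot hbot]; simp
  obtain ⟨v, q, hq, hu⟩ : ∃ v, ∃ q : MvPolynomial (Fin n) K, q.IsHomogeneous i ∧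
      Ideal.Quotient.mk I (w * (X v * q)) ≠ 0 := by
    by_contra hcon
    push Not at hcon
    exact hbot (eq_bot_iff.mpr (multPiece_succ_le fun v q hq => by
      rw [hcon v q hq]; exact zero_mem _))
  have hXq : ∀ v', (X v' * q).IsHomogeneous (i + 1) := fun v' => by
    rw [add_comm]; exact (isHomogeneous_X K v').mul hq
  have hspan : ∀ b : MvPolynomial (Fin n) K, b.IsHomogeneous (i + 1) →
      ∃ c : K, Ideal.Quotient.mk I (w * b) = c • Ideal.Quotient.mk I (w * (X v * q)) := by
    intro b hb
    obtain ⟨e, he⟩ := finrank_le_one_iff.mp h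
    obtain ⟨c₀, hc₀⟩ := he ⟨_, mem_multPiece (hXq v)⟩
    obtain ⟨c, hc⟩ := he ⟨_, mem_multPiece hb⟩
    have h0 := congrArg Subtype.val hc₀
    have h1 := congrArg Subtype.val hc
    simp only [Submodule.coe_smul] at h0 h1
    have hne : c₀ ≠ 0 := by
      rintro rfl
      exact hu (by rw [← h0, zero_smul])
    exact ⟨c * c₀⁻¹, by rw [← h0, ← h1, smul_smul, inv_mul_cancel_right₀ hne]⟩
  have hle : multPiece I w (i + 2) ≤
      Submodule.span K {Ideal.Quotient.mk I (X v * (w * (X v * q)))} := by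
    refine multPiece_succ_le fun v' b hb => ?_
    obtain ⟨c, hc⟩ := hspan b hb
    obtain ⟨c', hc'⟩ := hspan _ (hXq v')
    refine Submodule.mem_span_singleton.mpr ⟨c * c', ?_⟩
    rw [mul_left_comm w (X v') b, map_mul _ (X v') (w * b), hc, mul_smul_comm, ← map_mul,
      show X v' * (w * (X v * q)) = X v * (w * (X v' * q)) by ring,
      map_mul _ (X v) (w * (X v' * q)),
      hc', mul_smul_comm, smul_smul, ← map_mul]
  exact (Submodule.finrank_mono hle).trans (finrank_span_le_card _ |>.trans (by simp))

end MultPiece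

/-- Homogeneous elements of `I + (x)` for a linear form `x`. -/
theorem IsHomogIdeal.mem_sup_span_singleton {I : Ideal (MvPolynomial (Fin n) K)}
    (hI : IsHomogIdeal I) {x : MvPolynomial (Fin n) K} (hx : x.IsHomogeneous 1) {i : ℕ}
    {p : MvPolynomial (Fin n) K} (hp : p.IsHomogeneous (i + 1)) (hpJ : p ∈ I ⊔ Ideal.span {x}) :
    ∃ b : MvPolynomial (Fin n) K, b.IsHomogeneous i ∧ p - x * b ∈ I := by
  obtain ⟨a, ha, c, hc, rfl⟩ := Submodule.mem_sup.mp hpJ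
  obtain ⟨b, rfl⟩ := Ideal.mem_span_singleton'.mp hc
  refine ⟨homogeneousComponent i b, homogeneousComponent_isHomogeneous _ _, ?_⟩
  have h1 := homogeneousComponent_eq_self hp
  rw [map_add, mul_comm b x, add_comm i 1, homogeneousComponent_mul_of_isHomogeneous hx] at h1
  rw [mul_comm b x, ← h1, add_sub_cancel_right]
  exact hI a ha _

theorem IsHomogIdeal.sup_span_singleton_ne_top {I : Ideal (MvPolynomial (Fin n) K)}
    (hI : IsHomogIdeal I) (htop : I ≠ ⊤) {x : MvPolynomial (Fin n) K} (hx : x.IsHomogeneous 1) :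
    I ⊔ Ideal.span {x} ≠ ⊤ := by
  intro h
  obtain ⟨a, ha, c, hc, hac⟩ := Submodule.mem_sup.mp ((Ideal.eq_top_iff_one _).mp h)
  obtain ⟨b, rfl⟩ := Ideal.mem_span_singleton'.mp hc
  have h1 := congrArg (homogeneousComponent 0) hac
  rw [map_add, mul_comm, homogeneousComponent_mul_of_lt hx b one_pos, add_zero,
    homogeneousComponent_eq_self (isHomogeneous_one _ _)] at h1
  exact htop ((Ideal.eq_top_iff_one _).mpr (h1 ▸ hI a ha 0))

theorem IsHomogIdeal.hilbFn_succ {I : Ideal (MvPolynomial (Fin n) K)}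
    (hI : IsHomogIdeal I) {x : MvPolynomial (Fin n) K} (hx : x.IsHomogeneous 1) (i : ℕ) :
    hilbFn I (i + 1) =
      hilbFn (I ⊔ Ideal.span {x}) (i + 1) + Module.finrank K (multPiece I x i) := by
  set f : gradedPiece I (i + 1) →ₗ[K] (MvPolynomial (Fin n) K ⧸ I ⊔ Ideal.span {x}) :=
    (Ideal.Quotient.factorₐ K (le_sup_left : I ≤ I ⊔ Ideal.span {x})).toLinearMap.domRestrict
      (gradedPiece I (i + 1)) with hf
  have hle : multPiece I x i ≤ gradedPiece I (i + 1) := by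
    rintro _ ⟨p, hp, rfl⟩
    exact ⟨x * p, by rw [add_comm]; exact hx.mul hp, rfl⟩
  have hrange : LinearMap.range f = gradedPiece (I ⊔ Ideal.span {x}) (i + 1) := by
    rw [hf, LinearMap.range_domRestrict, gradedPiece, gradedPiece, ← Submodule.map_comp]
    congr 1
  have hker : LinearMap.ker f = (multPiece I x i).comap (gradedPiece I (i + 1)).subtype := by
    ext ⟨_, p, hp, rfl⟩
    simp only [hf, LinearMap.mem_ker, LinearMap.domRestrict_apply, AlgHom.toLinearMap_apply,
      Submodule.mem_comap, Submodule.subtype_apply, Ideal.Quotient.mkₐ_eq_mk]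
    change Ideal.Quotient.mk _ p = 0 ↔ _
    rw [Ideal.Quotient.eq_zero_iff_mem]
    constructor
    · intro hpJ
      obtain ⟨b, hb, hpb⟩ := hI.mem_sup_span_singleton hx hp hpJ
      rw [(Ideal.Quotient.eq).mpr hpb]
      exact mem_multPiece hb
    · rintro ⟨b, hb, hpb⟩
      have h1 : x * b - p ∈ I := Ideal.Quotient.eq.mp hpb
      have h2 : x * b ∈ I ⊔ Ideal.span {x} :=
        Ideal.mul_mem_right _ _ (Ideal.mem_sup_right (Ideal.mem_span_singleton_self x))
      have h3 := Ideal.sub_mem _ h2 (Ideal.mem_sup_left h1)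
      rwa [sub_sub_cancel] at h3
  have h1 := f.finrank_range_add_finrank_ker
  rw [hrange, hker, (Submodule.comapSubtypeEquivOfLe hle).finrank_eq] at h1
  exact h1.symm

/-- The homogenization in degree `i` of a univariate polynomial, in the last two of three
variables. -/
def homogenization (K : Type*) [Field K] (i : ℕ) :
    Polynomial K →ₗ[K] MvPolynomial (Fin 3) K :=
  ∑ k ∈ Finset.range (i + 1), (LinearMap.toSpanSingleton K _ (X 1 ^ k * X 2 ^ (i - k))) ∘ₗ
    Polynomial.lcoeff K k

theorem homogenization_apply (i : ℕ) (p : Polynomial K) :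
    homogenization K i p =
      ∑ k ∈ Finset.range (i + 1), p.coeff k • (X 1 ^ k * X 2 ^ (i - k)) := by
  simp [homogenization]

theorem isHomogeneous_homogenization (i : ℕ) (p : Polynomial K) :
    (homogenization K i p).IsHomogeneous i := by
  rw [homogenization_apply, ← mem_homogeneousSubmodule]
  refine Submodule.sum_mem _ fun k hk => Submodule.smul_mem _ _ ?_
  have h := (isHomogeneous_X_pow (R := K) (1 : Fin 3) k).mul
    (isHomogeneous_X_pow (R := K) (2 : Fin 3) (i - k))
  rwa [show k + (i - k) = i by have := Finset.mem_range.mp hk; omega] at h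

theorem homogenization_X_mul (i : ℕ) (p : Polynomial K) :
    homogenization K (i + 1) (Polynomial.X * p) = X 1 * homogenization K i p := by
  rw [homogenization_apply, homogenization_apply, Finset.sum_range_succ', Finset.mul_sum]
  simp only [Polynomial.coeff_X_mul, Polynomial.coeff_X_mul_zero, zero_smul, add_zero]
  refine Finset.sum_congr rfl fun k _ => ?_
  rw [mul_smul_comm, ← mul_assoc, ← pow_succ', Nat.add_sub_add_right]

theorem homogenization_succ (i : ℕ) {p : Polynomial K} (hp : p.coeff (i + 1) = 0) :
    homogenization K (i + 1) p = X 2 * homogenization K i p := by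
  rw [homogenization_apply, homogenization_apply, Finset.sum_range_succ, Finset.mul_sum, hp,
    zero_smul, add_zero]
  refine Finset.sum_congr rfl fun k hk => ?_
  have := Finset.mem_range.mp hk
  rw [mul_smul_comm, mul_left_comm, ← pow_succ', show i + 1 - k = i - k + 1 by omega]

/-- The polynomials of degree at most `i` whose homogenization lies in `J`. -/
def dehomogPiece (J : Ideal (MvPolynomial (Fin 3) K)) (i : ℕ) : Submodule K (Polynomial K) :=
  Polynomial.degreeLT K (i + 1) ⊓ (J.restrictScalars K).comap (homogenization K i)

theorem mem_dehomogPiece {J : Ideal (MvPolynomial (Fin 3) K)} {i : ℕ} {p : Polynomial K} :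
    p ∈ dehomogPiece J i ↔ p.degree < (i + 1 : ℕ) ∧ homogenization K i p ∈ J := by
  rw [dehomogPiece, Submodule.mem_inf, Polynomial.mem_degreeLT]; rfl

theorem hilbFn_add_finrank_dehomogPiece {J : Ideal (MvPolynomial (Fin 3) K)} (hJ : X 0 ∈ J)
    (i : ℕ) : hilbFn J i + Module.finrank K (dehomogPiece J i) = i + 1 := by
  set f : Polynomial.degreeLT K (i + 1) →ₗ[K] (MvPolynomial (Fin 3) K ⧸ J) :=
    ((Ideal.Quotient.mkₐ K J).toLinearMap ∘ₗ homogenization K i).domRestrict _ with hf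
  have hker : LinearMap.ker f =
      (dehomogPiece J i).comap (Polynomial.degreeLT K (i + 1)).subtype := by
    ext ⟨p, hp⟩
    rw [Polynomial.mem_degreeLT] at hp
    push_cast at hp
    simp [hf, mem_dehomogPiece, hp, Ideal.Quotient.eq_zero_iff_mem]
  have hrange : LinearMap.range f = gradedPiece J i := by
    rw [hf, LinearMap.range_domRestrict]
    apply le_antisymm
    · rintro _ ⟨p, -, rfl⟩
      exact ⟨_, isHomogeneous_homogenization i p, rfl⟩
    · rw [gradedPiece, Submodule.map_le_iff_le_comap]
      intro p hp
      rw [p.as_sum]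
      refine Submodule.sum_mem _ fun d hd => ?_
      have hdeg : d.degree = i := by
        by_contra hne
        exact (mem_support_iff.mp hd) (IsHomogeneous.coeff_eq_zero hp hne)
      have hsum : d 0 + d 1 + d 2 = i := by
        rw [← hdeg, Finsupp.degree_eq_sum, Fin.sum_univ_three]
      have hmon : monomial d (coeff d p) = coeff d p • (X 0 ^ d 0 * X 1 ^ d 1 * X 2 ^ d 2) := by
        rw [monomial_eq, Finsupp.prod_fintype _ _ (fun _ => pow_zero _), Fin.prod_univ_three,
          smul_eq_C_mul]
      rw [Submodule.mem_comap, hmon]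
      by_cases h0 : d 0 = 0
      · refine ⟨Polynomial.monomial (d 1) (coeff d p), ?_, ?_⟩
        · rw [SetLike.mem_coe, Polynomial.mem_degreeLT]
          exact (Polynomial.degree_monomial_le _ _).trans_lt (by exact_mod_cast (by omega))
        · rw [LinearMap.comp_apply, homogenization_apply,
            Finset.sum_eq_single_of_mem (d 1) (Finset.mem_range.mpr (by omega))]
          · simp [h0, show i - d 1 = d 2 by omega]
          · intro k _ hk
            rw [Polynomial.coeff_monomial, if_neg hk.symm, zero_smul]
      · have : (Ideal.Quotient.mkₐ K J).toLinearMap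
            (coeff d p • (X 0 ^ d 0 * X 1 ^ d 1 * X 2 ^ d 2)) = 0 := by
          rw [map_smul, AlgHom.toLinearMap_apply, Ideal.Quotient.mkₐ_eq_mk,
            Ideal.Quotient.eq_zero_iff_mem.mpr, smul_zero]
          exact Ideal.mul_mem_right _ _ (Ideal.mul_mem_right _ _
            (Ideal.pow_mem_of_mem _ hJ _ (Nat.pos_of_ne_zero h0)))
        rw [this]
        exact zero_mem _
  have h1 := f.finrank_range_add_finrank_ker
  have hle : dehomogPiece J i ≤ Polynomial.degreeLT K (i + 1) := inf_le_left
  rw [hrange, hker, (Submodule.comapSubtypeEquivOfLe hle).finrank_eq,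
    (Polynomial.degreeLTEquiv K (i + 1)).finrank_eq, Module.finrank_fin_fun] at h1
  exact h1

instance (J : Ideal (MvPolynomial (Fin 3) K)) (i : ℕ) :
    FiniteDimensional K (dehomogPiece J i) :=
  have : FiniteDimensional K (Polynomial.degreeLT K (i + 1)) :=
    (Polynomial.degreeLTEquiv K (i + 1)).symm.finiteDimensional
  Submodule.finiteDimensional_of_le inf_le_left

theorem hilbFn_le {J : Ideal (MvPolynomial (Fin 3) K)} (hJ : X 0 ∈ J) (i : ℕ) :
    hilbFn J i ≤ i + 1 := by
  have := hilbFn_add_finrank_dehomogPiece hJ i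
  omega

/-- Macaulay's bound for quotients of a polynomial ring in two variables. -/
theorem hilbFn_succ_le {J : Ideal (MvPolynomial (Fin 3) K)} (hJ : X 0 ∈ J) {i : ℕ}
    (hi : hilbFn J i ≤ i) : hilbFn J (i + 1) ≤ hilbFn J i := by
  have h1 := hilbFn_add_finrank_dehomogPiece hJ i
  have h2 := hilbFn_add_finrank_dehomogPiece hJ (i + 1)
  suffices Module.finrank K (dehomogPiece J i) < Module.finrank K (dehomogPiece J (i + 1)) by
    omega
  have hX : ∀ v ∈ dehomogPiece J i, Polynomial.X * v ∈ dehomogPiece J (i + 1) := by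
    intro v hv
    rw [mem_dehomogPiece] at hv ⊢
    refine ⟨?_, ?_⟩
    · rw [Polynomial.degree_lt_iff_coeff_zero] at hv ⊢
      intro m hm
      obtain ⟨m, rfl⟩ : ∃ m', m = m' + 1 := ⟨m - 1, by omega⟩
      rw [Polynomial.coeff_X_mul]
      exact hv.1 m (by omega)
    · rw [homogenization_X_mul]
      exact J.mul_mem_left _ hv.2
  apply Submodule.finrank_lt_finrank_of_lt
  refine lt_of_le_of_ne ?_ ?_
  · intro v hv
    rw [mem_dehomogPiece] at hv ⊢
    refine ⟨hv.1.trans (by exact_mod_cast Nat.lt_succ_self _), ?_⟩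
    rw [homogenization_succ]
    · exact J.mul_mem_left _ hv.2
    · exact Polynomial.degree_lt_iff_coeff_zero _ _ |>.mp hv.1 _ le_rfl
  · intro heq
    rw [← heq] at hX
    have hne : dehomogPiece J i ≠ ⊥ := by
      intro hbot
      rw [hbot, finrank_bot] at h1
      omega
    obtain ⟨v, hv, hv0⟩ := Submodule.exists_mem_ne_zero_of_ne_bot hne
    have hpow : ∀ k, Polynomial.X ^ k * v ∈ dehomogPiece J i := by
      intro k
      induction k with
      | zero => simpa using hv
      | succ k ih => rw [pow_succ', mul_assoc]; exact hX _ ih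
    have h3 := (mem_dehomogPiece.mp (hpow (i + 1))).1
    rw [Polynomial.degree_lt_iff_coeff_zero] at h3
    have h4 := h3 (v.natDegree + (i + 1)) (by omega)
    rw [Polynomial.coeff_X_pow_mul, Polynomial.coeff_natDegree,
      Polynomial.leadingCoeff_eq_zero] at h4
    exact hv0 h4

theorem ConcentratedIn.linearSection {φ : MvPolynomial (Fin 3) K →ₗ[K] K} {j : ℕ}
    (h : ConcentratedIn φ j) (hx : X 0 ∉ annIdeal φ) :
    LinearSection j (hilbFn (annIdeal φ)) (hilbFn (annIdeal φ ⊔ Ideal.span {X 0}))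
      (fun i => Module.finrank K (multPiece (annIdeal φ) (X 0) i)) := by
  have hX : (X 0 : MvPolynomial (Fin 3) K).IsHomogeneous 1 := isHomogeneous_X _ _
  have htop : annIdeal φ ≠ ⊤ := by
    intro ht; rw [ht] at hx; exact hx trivial
  have hJ : X 0 ∈ annIdeal φ ⊔ Ideal.span {X 0} :=
    Ideal.mem_sup_right (Ideal.mem_span_singleton_self _)
  have psymm : ∀ i < j, Module.finrank K (multPiece (annIdeal φ) (X 0) i) =
      Module.finrank K (multPiece (annIdeal φ) (X 0) (j - 1 - i)) := fun i hi =>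
    h.finrank_multPiece_symm hX (by omega)
  refine ⟨fun i => h.hilbFn_of_lt, fun i => h.hilbFn_symm, psymm, ?_, ?_,
    fun i => h.isHomogIdeal.hilbFn_succ hX i, hilbFn_zero htop,
    hilbFn_zero (h.isHomogIdeal.sup_span_singleton_ne_top htop hX),
    fun i => hilbFn_le hJ i, fun i => hilbFn_succ_le hJ⟩
  · intro i hi
    rw [Nat.one_le_iff_ne_zero, Ne, Submodule.finrank_eq_zero]
    intro hbot
    have hall : ∀ l, i ≤ l → multPiece (annIdeal φ) (X 0) l = ⊥ := by
      intro l hl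
      induction l, hl using Nat.le_induction with
      | base => exact hbot
      | succ l hl ih => exact multPiece_succ_eq_bot ih
    have h0 := psymm 0 (by omega)
    rw [hall (j - 1 - 0) (by omega), finrank_bot, Submodule.finrank_eq_zero] at h0
    have h1 := mem_multPiece (I := annIdeal φ) (w := X 0) (isHomogeneous_one (Fin 3) K)
    rw [h0, Submodule.mem_bot, mul_one, Ideal.Quotient.eq_zero_iff_mem] at h1
    exact hx h1
  · intro i hi
    obtain ⟨i, rfl⟩ : ∃ i', i = i' + 1 := ⟨i - 1, by omega⟩
    exact finrank_multPiece_succ_le_one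

theorem mem_socleSub {I : Ideal (MvPolynomial (Fin n) K)} {p : MvPolynomial (Fin n) K} :
    Ideal.Quotient.mk I p ∈ socleSub I ↔ ∀ v, X v * p ∈ I := by
  simp only [socleSub, Submodule.mem_iInf, LinearMap.mem_ker, LinearMap.mulLeft_apply, ← map_mul,
    Ideal.Quotient.eq_zero_iff_mem]

theorem IsHomogIdeal.mem_of_forall {I J : Ideal (MvPolynomial (Fin n) K)} (hI : IsHomogIdeal I)
    (h : ∀ i, ∀ p : MvPolynomial (Fin n) K, p.IsHomogeneous i → p ∈ I → p ∈ J) : I ≤ J := by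
  intro p hp
  rw [← sum_homogeneousComponent p]
  exact Ideal.sum_mem _ fun i _ => h i _ (homogeneousComponent_isHomogeneous _ _) (hI p hp i)

/-- Forms of large degree vanish in a finite-dimensional graded quotient. -/
theorem IsHomogIdeal.exists_forall_mem {I : Ideal (MvPolynomial (Fin n) K)} (hI : IsHomogIdeal I)
    [FiniteDimensional K (MvPolynomial (Fin n) K ⧸ I)] :
    ∃ M, ∀ i, M ≤ i → ∀ p : MvPolynomial (Fin n) K, p.IsHomogeneous i → p ∈ I := by
  have hX : ∀ v : Fin n, ∃ k, (X v : MvPolynomial (Fin n) K) ^ k ∈ I := by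
    intro v
    by_contra hcon
    push Not at hcon
    set x := Ideal.Quotient.mk I (X v) with hx
    obtain ⟨f, hf, hfx⟩ := IsIntegral.of_finite K x
    have h1 : Polynomial.aeval (X v : MvPolynomial (Fin n) K) f ∈ I := by
      rw [← Ideal.Quotient.eq_zero_iff_mem, ← Ideal.Quotient.mkₐ_eq_mk K,
        ← Polynomial.aeval_algHom_apply]
      exact hfx
    have h2 := hI _ h1 f.natDegree
    rw [Polynomial.aeval_eq_sum_range, map_sum, Finset.sum_eq_single_of_mem f.natDegree
      (Finset.self_mem_range_succ _)] at h2
    · rw [map_smul, homogeneousComponent_eq_self (isHomogeneous_X_pow v _),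
        Polynomial.coeff_natDegree, hf.leadingCoeff, one_smul] at h2
      exact hcon _ h2
    · intro k _ hk
      rw [map_smul, homogeneousComponent_of_mem (isHomogeneous_X_pow v _), if_neg hk.symm,
        smul_zero]
  choose k hk using hX
  refine ⟨∑ v, k v + 1, fun i hi p hp => ?_⟩
  rw [p.as_sum]
  refine Ideal.sum_mem _ fun d hd => ?_
  have hdeg : d.degree = i := by
    by_contra hne
    exact (mem_support_iff.mp hd) (IsHomogeneous.coeff_eq_zero hp hne)
  obtain ⟨v, hv⟩ : ∃ v, k v ≤ d v := by
    by_contra hcon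
    push Not at hcon
    have h1 : ∑ v, d v ≤ ∑ v, k v := Finset.sum_le_sum fun v _ => (hcon v).le
    rw [← Finsupp.degree_eq_sum, hdeg] at h1
    omega
  have hle : Finsupp.single v (k v) ≤ d := by simpa [Finsupp.single_le_iff] using hv
  rw [← add_tsub_cancel_of_le hle, ← one_mul (coeff _ p), ← monomial_mul,
    ← X_pow_eq_monomial]
  exact Ideal.mul_mem_right _ _ (hk v)

/-- A graded Artinian Gorenstein quotient is cut out by a linear functional on forms of a fixed
degree. -/
theorem IsAG.exists_eq_annIdeal {I : Ideal (MvPolynomial (Fin n) K)} (h : IsAG I) :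
    ∃ j φ, ConcentratedIn φ j ∧ I = annIdeal φ := by
  obtain ⟨hI, -, hfin, hsoc⟩ := h
  obtain ⟨⟨_, hs⟩, hne, hgen⟩ := finrank_eq_one_iff'.mp hsoc
  rename_i s
  obtain ⟨g, rfl⟩ := Ideal.Quotient.mk_surjective s
  have hgI : g ∉ I := by
    intro hg
    exact hne (Subtype.ext (Ideal.Quotient.eq_zero_iff_mem.mpr hg))
  obtain ⟨j, hj⟩ : ∃ j, homogeneousComponent j g ∉ I := by
    by_contra hcon
    push Not at hcon
    rw [← sum_homogeneousComponent g] at hgI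
    exact hgI (Ideal.sum_mem _ fun i _ => hcon i)
  set e := homogeneousComponent j g with he
  have hegen : ∀ p, Ideal.Quotient.mk I p ∈ socleSub I →
      ∃ c : K, Ideal.Quotient.mk I p = c • Ideal.Quotient.mk I e := by
    have hes : Ideal.Quotient.mk I e ∈ socleSub I := by
      rw [mem_socleSub] at hs ⊢
      intro v
      rw [he, ← homogeneousComponent_mul_of_isHomogeneous (isHomogeneous_X K v)]
      exact hI _ (hs v) _
    obtain ⟨c₀, hc₀⟩ := hgen ⟨_, hes⟩
    intro p hp
    obtain ⟨c, hc⟩ := hgen ⟨_, hp⟩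
    have h0 := congrArg Subtype.val hc₀
    have h1 := congrArg Subtype.val hc
    simp only [Submodule.coe_smul] at h0 h1
    have hne : c₀ ≠ 0 := by
      rintro rfl
      rw [zero_smul] at h0
      exact hj (Ideal.Quotient.eq_zero_iff_mem.mp h0.symm)
    exact ⟨c * c₀⁻¹, by rw [← h0, ← h1, smul_smul, inv_mul_cancel_right₀ hne]⟩
  have hehom : e.IsHomogeneous j := homogeneousComponent_isHomogeneous _ _
  obtain ⟨f, hf⟩ := Module.Projective.exists_dual_eq_one K
    (fun h0 => hj (Ideal.Quotient.eq_zero_iff_mem.mp h0) : Ideal.Quotient.mk I e ≠ 0)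
  set φ : MvPolynomial (Fin n) K →ₗ[K] K :=
    f ∘ₗ (Ideal.Quotient.mkₐ K I).toLinearMap ∘ₗ homogeneousComponent j with hφ
  have hφ_apply : ∀ p, φ p = f (Ideal.Quotient.mk I (homogeneousComponent j p)) := fun _ => rfl
  have hφI : ∀ p ∈ I, φ p = 0 := fun p hp => by
    rw [hφ_apply, Ideal.Quotient.eq_zero_iff_mem.mpr (hI p hp j), map_zero]
  have hφe : φ e = 1 := by rw [hφ_apply, homogeneousComponent_eq_self hehom, hf]
  have hconc : ConcentratedIn φ j := fun p => by
    rw [hφ_apply, hφ_apply, homogeneousComponent_eq_self (homogeneousComponent_isHomogeneous j p)]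
  refine ⟨j, φ, hconc, le_antisymm (fun p hp q => hφI _ (I.mul_mem_right q hp)) ?_⟩
  obtain ⟨M, hM⟩ := hI.exists_forall_mem
  have hdesc : ∀ m i, M ≤ i + m → ∀ p : MvPolynomial (Fin n) K, p.IsHomogeneous i →
      p ∈ annIdeal φ → p ∈ I := by
    intro m
    induction m with
    | zero => exact fun i hi p hp _ => hM i hi p hp
    | succ m ih =>
      intro i hi p hp hpφ
      have hsocle : Ideal.Quotient.mk I p ∈ socleSub I := mem_socleSub.mpr fun v =>
        ih (1 + i) (by omega) _ ((isHomogeneous_X K v).mul hp) (Ideal.mul_mem_left _ _ hpφ)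
      obtain ⟨c, hc⟩ := hegen p hsocle
      have h1 : p - c • e ∈ I := Ideal.Quotient.eq.mp hc
      have h2 := hφI _ h1
      have h3 := hpφ 1
      rw [mul_one] at h3
      rw [map_sub, map_smul, h3, hφe, smul_eq_mul, mul_one, zero_sub, neg_eq_zero] at h2
      rwa [h2, zero_smul, sub_zero] at h1
  exact hconc.isHomogIdeal.mem_of_forall fun i p hp => hdesc M i (by omega) p hp

/-- Every nonzero linear functional on the forms of a fixed degree defines a graded Artinian
Gorenstein quotient. -/
theorem ConcentratedIn.isAG {φ : MvPolynomial (Fin n) K →ₗ[K] K} {j : ℕ}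
    (h : ConcentratedIn φ j) (hφ : φ ≠ 0) : IsAG (annIdeal φ) := by
  have hφI : ∀ p ∈ annIdeal φ, φ p = 0 := fun p hp => by simpa using hp 1
  refine ⟨h.isHomogIdeal, ?_, ?_, ?_⟩
  · intro htop
    exact hφ (LinearMap.ext fun p => hφI p (htop ▸ Submodule.mem_top))
  · have hsum : (⊤ : Submodule K (MvPolynomial (Fin n) K ⧸ annIdeal φ)) =
        ⨆ i : Fin (j + 1), gradedPiece (annIdeal φ) i := by
      rw [eq_comm, eq_top_iff]
      rintro x -
      obtain ⟨p, rfl⟩ := Ideal.Quotient.mk_surjective x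
      rw [← sum_homogeneousComponent p, map_sum]
      refine Submodule.sum_mem _ fun i _ => ?_
      have hi := homogeneousComponent_isHomogeneous i p
      by_cases hij : j < i
      · rw [Ideal.Quotient.eq_zero_iff_mem.mpr (h.mem_annIdeal_of_lt hi hij)]
        exact zero_mem _
      · exact Submodule.mem_iSup_of_mem (⟨i, by omega⟩ : Fin (j + 1))
          (Submodule.mem_map_of_mem (f := (Ideal.Quotient.mkₐ K (annIdeal φ)).toLinearMap) hi)
    have : FiniteDimensional K (⊤ : Submodule K (MvPolynomial (Fin n) K ⧸ annIdeal φ)) := by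
      rw [hsum]; infer_instance
    exact Module.finite_def.mpr (Module.Finite.iff_fg.mp this)
  · have hsoc : ∀ p, Ideal.Quotient.mk (annIdeal φ) p ∈ socleSub (annIdeal φ) → φ p = 0 →
        p ∈ annIdeal φ := by
      intro p hp hp0 q
      rw [mem_socleSub] at hp
      induction q using MvPolynomial.induction_on with
      | C c => rw [mul_comm, ← smul_eq_C_mul, map_smul, hp0, smul_zero]
      | add a b ha hb => rw [mul_add, map_add, ha, hb, add_zero]
      | mul_X a v _ =>
        rw [mul_comm a, ← mul_assoc, mul_comm p]
        exact hp v a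
    obtain ⟨d, hd⟩ : ∃ d, φ (monomial d 1) ≠ 0 := by
      by_contra hcon
      push Not at hcon
      exact hφ ((basisMonomials (Fin n) K).ext fun d => by simpa using hcon d)
    have hdj : d.degree = j := by
      by_contra hne
      exact hd (h.eq_zero (isHomogeneous_monomial _ rfl) hne)
    have hds : Ideal.Quotient.mk (annIdeal φ) (monomial d 1) ∈ socleSub (annIdeal φ) :=
      mem_socleSub.mpr fun v => h.mem_annIdeal_of_lt
        ((isHomogeneous_X K v).mul (isHomogeneous_monomial _ hdj)) (by omega)
    refine finrank_eq_one_iff'.mpr ⟨⟨_, hds⟩, ?_, ?_⟩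
    · intro h0
      exact hd (hφI _ (Ideal.Quotient.eq_zero_iff_mem.mp (congrArg Subtype.val h0)))
    · rintro ⟨x, hx⟩
      obtain ⟨p, rfl⟩ := Ideal.Quotient.mk_surjective x
      refine ⟨φ p * (φ (monomial d 1))⁻¹, Subtype.ext ?_⟩
      have h1 := Submodule.sub_mem _
        (Submodule.smul_mem _ (φ p * (φ (monomial d 1))⁻¹) hds) hx
      have h2 : (φ p * (φ (monomial d 1))⁻¹) • monomial d 1 - p ∈ annIdeal φ := by
        refine hsoc _ h1 ?_
        rw [map_sub, map_smul, smul_eq_mul, inv_mul_cancel_right₀ hd, sub_self]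
      exact Ideal.Quotient.eq.mpr h2

theorem IsAG.hasSmallShape {I : Ideal (MvPolynomial (Fin 3) K)} (h : IsAG I)
    (h3 : hilbFn I 1 = 3) (h6 : ∀ i, hilbFn I i ≤ 6) : HasSmallShape (hilbFn I) := by
  obtain ⟨j, φ, hφ, rfl⟩ := h.exists_eq_annIdeal
  refine (hφ.linearSection fun hx => ?_).classify h3 h6
  have := hilbFn_le hx 1
  omega

/-- The linear functional on polynomials in three variables sending a monomial to `1` if its
exponents satisfy `P` and to `0` otherwise. -/
def monomialForm (K : Type*) [Field K] (P : ℕ → ℕ → ℕ → Prop) : MvPolynomial (Fin 3) K →ₗ[K] K :=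
  (basisMonomials (Fin 3) K).constr K fun d => if P (d 0) (d 1) (d 2) then 1 else 0

section MonomialForm

variable {P : ℕ → ℕ → ℕ → Prop}

theorem monomialForm_monomial (d : Fin 3 →₀ ℕ) (c : K) :
    monomialForm K P (monomial d c) = if P (d 0) (d 1) (d 2) then c else 0 := by
  have h := (basisMonomials (Fin 3) K).constr_basis K
    (fun d => if P (d 0) (d 1) (d 2) then (1 : K) else 0) d
  rw [coe_basisMonomials] at h
  rw [← mul_one c, ← smul_eq_mul, ← smul_monomial, map_smul, monomialForm, h]
  split_ifs <;> simp

theorem concentratedIn_monomialForm {j : ℕ} (hP : ∀ a b c, P a b c → a + b + c = j) :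
    ConcentratedIn (monomialForm K P) j := by
  intro p
  induction p using MvPolynomial.induction_on' with
  | add p q hp hq => rw [map_add, map_add, map_add, hp, hq]
  | monomial d c =>
    rw [homogeneousComponent_of_mem (isHomogeneous_monomial c rfl)]
    split_ifs with h
    · rfl
    · rw [map_zero, monomialForm_monomial, if_neg]
      intro hd
      rw [Finsupp.degree_eq_sum, Fin.sum_univ_three, hP _ _ _ hd] at h
      exact h rfl

/-- The exponent vector with given entries. -/
def tripleExponent (t : ℕ × ℕ × ℕ) : Fin 3 →₀ ℕ :=
  Finsupp.equivFunOnFinite.symm ![t.1, t.2.1, t.2.2]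

@[simp] theorem tripleExponent_zero (t : ℕ × ℕ × ℕ) : tripleExponent t 0 = t.1 := rfl

@[simp] theorem tripleExponent_one (t : ℕ × ℕ × ℕ) : tripleExponent t 1 = t.2.1 := rfl

@[simp] theorem tripleExponent_two (t : ℕ × ℕ × ℕ) : tripleExponent t 2 = t.2.2 := rfl

/-- If the matrix pairing the monomials of degree `i` with all monomials is, up to zero rows, an
identity matrix bordered by further columns, then the size of this identity matrix is the value of
the Hilbert function. -/
theorem hilbFn_monomialForm {i : ℕ} {ι : Type*}
    [Fintype ι] (r s : ι → ℕ × ℕ × ℕ) (hr : ∀ a, (r a).1 + (r a).2.1 + (r a).2.2 = i)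
    (hrs : ∀ a b, P ((r a).1 + (s b).1) ((r a).2.1 + (s b).2.1) ((r a).2.2 + (s b).2.2) ↔ a = b)
    (hrow : ∀ a b c a' b' c', a + b + c = i → P (a + a') (b + b') (c + c') →
      ∃ x, r x = (a, b, c)) :
    hilbFn (annIdeal (monomialForm K P)) i = Fintype.card ι := by
  set φ := monomialForm K P with hφ
  set u : ι → MvPolynomial (Fin 3) K ⧸ annIdeal φ := fun a =>
    Ideal.Quotient.mk (annIdeal φ) (monomial (tripleExponent (r a)) 1) with hu
  have hspan : gradedPiece (annIdeal φ) i = Submodule.span K (Set.range u) := by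
    apply le_antisymm
    · rw [gradedPiece, Submodule.map_le_iff_le_comap]
      intro p hp
      rw [p.as_sum]
      refine Submodule.sum_mem _ fun d hd => ?_
      have hdeg : d 0 + d 1 + d 2 = i := by
        rw [← Fin.sum_univ_three, ← Finsupp.degree_eq_sum]
        by_contra hne
        exact (mem_support_iff.mp hd) (IsHomogeneous.coeff_eq_zero hp hne)
      rw [Submodule.mem_comap, ← mul_one (coeff d p), ← smul_eq_mul, ← smul_monomial, map_smul]
      refine Submodule.smul_mem _ _ ?_
      by_cases hdr : ∃ x, r x = (d 0, d 1, d 2)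
      · obtain ⟨x, hx⟩ := hdr
        refine Submodule.subset_span ⟨x, ?_⟩
        have : tripleExponent (r x) = d := by
          ext v; fin_cases v <;> simp [hx]
        rw [hu]
        simp [this]
      · have h0 : monomial d (1 : K) ∈ annIdeal φ := by
          intro q
          induction q using MvPolynomial.induction_on' with
          | add p q hp hq => rw [mul_add, map_add, hp, hq, add_zero]
          | monomial e c =>
            rw [monomial_mul, hφ, monomialForm_monomial, if_neg]
            exact fun h => hdr (hrow _ _ _ _ _ _ hdeg h)
        rw [AlgHom.toLinearMap_apply, Ideal.Quotient.mkₐ_eq_mk,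
          Ideal.Quotient.eq_zero_iff_mem.mpr h0]
        exact zero_mem _
    · rw [Submodule.span_le]
      rintro _ ⟨a, rfl⟩
      refine ⟨_, isHomogeneous_monomial 1 ?_, rfl⟩
      rw [Finsupp.degree_eq_sum, Fin.sum_univ_three]
      exact hr a
  have hind : LinearIndependent K u := by
    rw [Fintype.linearIndependent_iff]
    intro g hg b
    have h1 : ∑ a, g a • monomial (tripleExponent (r a)) (1 : K) ∈ annIdeal φ := by
      rw [← Ideal.Quotient.eq_zero_iff_mem, ← Ideal.Quotient.mkₐ_eq_mk K, map_sum, ← hg]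
      exact Finset.sum_congr rfl fun a _ => map_smul _ _ _
    have h2 := h1 (monomial (tripleExponent (s b)) 1)
    simpa [Finset.sum_mul, monomial_mul, hφ, monomialForm_monomial, hrs] using h2
  rw [hilbFn, hspan, finrank_span_eq_card hind]

end MonomialForm

theorem exists_isAG_hilbFn_eq_repSeq {P : ℕ → ℕ → ℕ → Prop} {j : ℕ} (a : List ℕ) (mid : ℕ)
    (hP : ∀ a b c, P a b c → a + b + c = j) (hne : ∃ a b c, P a b c) (hj : 2 * a.length ≤ j)
    (h0 : a.getD 0 0 = 1)
    (ha : ∀ i, 1 ≤ i → i < a.length →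
      hilbFn (annIdeal (monomialForm K P)) i = a.getD i 0)
    (hmid : ∀ i, a.length ≤ i → 2 * i ≤ j → hilbFn (annIdeal (monomialForm K P)) i = mid) :
    ∃ I : Ideal (MvPolynomial (Fin 3) K), IsAG I ∧
      ∀ i, hilbFn I i = repSeq a mid (j + 1 - 2 * a.length) a.reverse i := by
  have hc := concentratedIn_monomialForm (K := K) hP
  have hφ : monomialForm K P ≠ 0 := by
    obtain ⟨x, y, z, h⟩ := hne
    intro h0
    have h1 := monomialForm_monomial (P := P) (tripleExponent (x, y, z)) (1 : K)
    rw [h0] at h1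
    simp [h] at h1
  refine ⟨_, hc.isAG hφ, eq_repSeq_of_symmetric _ j a mid (fun i => hc.hilbFn_of_lt)
    (fun i => hc.hilbFn_symm) hj (fun i hi => ?_) hmid⟩
  rcases Nat.eq_zero_or_pos i with rfl | hi0
  · rw [h0, hilbFn_zero (hc.isAG hφ).2.1]
  · exact ha i hi0 hi

/-- The Hilbert function attached to `X ^ (j - m) * Y ^ m + Z ^ j`. -/
theorem hilbFn_monomialForm_binary {j m i : ℕ} (hm : 2 * m ≤ j) (hi : 1 ≤ i) (hij : 2 * i ≤ j) :
    hilbFn (annIdeal (monomialForm K fun a b c =>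
      a = j - m ∧ b = m ∧ c = 0 ∨ a = 0 ∧ b = 0 ∧ c = j)) i = min i m + 2 := by
  rw [hilbFn_monomialForm (ι := Option (Fin (min i m + 1)))
    (fun x => x.elim (0, 0, i) fun b => (i - b, (b : ℕ), 0))
    (fun x => x.elim (0, 0, j - i) fun b => (j - m - (i - b), m - b, 0))]
  · simp
  · rintro (_ | ⟨b, hb⟩) <;> simp only [Option.elim] <;> omega
  · rintro (_ | ⟨b, hb⟩) (_ | ⟨b', hb'⟩) <;> simp <;> omega
  · intro a b c a' b' c' hdeg h
    by_cases hc : c = 0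
    · exact ⟨some ⟨b, by omega⟩, by simp; omega⟩
    · exact ⟨none, by simp; omega⟩

theorem exists_isAG_binary (m : ℕ) {k : ℕ} (hk : 1 ≤ k) (a : List ℕ) (hm : a.length = m)
    (h1 : 1 ≤ m) (h0 : a.getD 0 0 = 1) (ha : ∀ i, 1 ≤ i → i < m → a.getD i 0 = i + 2) :
    ∃ I : Ideal (MvPolynomial (Fin 3) K), IsAG I ∧
      ∀ i, hilbFn I i = repSeq a (m + 2) k a.reverse i := by
  have h := exists_isAG_hilbFn_eq_repSeq (K := K) (j := k + 2 * m - 1) (P := fun a b c =>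
      a = k + 2 * m - 1 - m ∧ b = m ∧ c = 0 ∨ a = 0 ∧ b = 0 ∧ c = k + 2 * m - 1) a (m + 2)
    (by omega) ⟨0, 0, _, Or.inr ⟨rfl, rfl, rfl⟩⟩ (by omega) h0
    (fun i hi him => by
      rw [hilbFn_monomialForm_binary (by omega) hi (by omega), ha i hi (by omega)]; omega)
    (fun i hi hij => by
      rw [hilbFn_monomialForm_binary (by omega) (by omega) hij]; omega)
  rwa [show k + 2 * m - 1 + 1 - 2 * a.length = k by omega] at h

theorem exists_isAG_five {k : ℕ} (hk : 1 ≤ k) :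
    ∃ I : Ideal (MvPolynomial (Fin 3) K), IsAG I ∧
      ∀ i, hilbFn I i = repSeq [1, 3] 5 k [3, 1] i := by
  have h := exists_isAG_hilbFn_eq_repSeq (K := K) (j := k + 3) (P := fun a b c =>
      a = k + 2 ∧ b = 1 ∧ c = 0 ∨ a = 0 ∧ b = k + 2 ∧ c = 1 ∨ a = 0 ∧ b = 0 ∧ c = k + 3)
    [1, 3] 5 (by omega) ⟨0, 0, _, Or.inr (Or.inr ⟨rfl, rfl, rfl⟩)⟩
    (by simp only [List.length_cons, List.length_nil]; omega) rfl ?_ ?_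
  · exact h
  · intro i hi hi2
    obtain rfl : i = 1 := by simp only [List.length_cons, List.length_nil] at hi2; omega
    rw [hilbFn_monomialForm (ι := Fin 3) ![(1, 0, 0), (0, 1, 0), (0, 0, 1)]
      ![(k + 1, 1, 0), (0, k + 1, 1), (0, 0, k + 2)]]
    · rfl
    · simp [Fin.forall_fin_succ]
    · simp only [Fin.forall_fin_succ]; simp; omega
    · intro a b c a' b' c' hdeg h
      simp only [Fin.exists_fin_succ]; simp; omega
  · intro i hi hij
    simp only [List.length_cons, List.length_nil] at hi
    rw [hilbFn_monomialForm (ι := Fin 5)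
      ![(i, 0, 0), (i - 1, 1, 0), (0, i, 0), (0, i - 1, 1), (0, 0, i)]
      ![(k + 2 - i, 1, 0), (k + 3 - i, 0, 0), (0, k + 2 - i, 1), (0, k + 3 - i, 0),
        (0, 0, k + 3 - i)]]
    · rfl
    · simp [Fin.forall_fin_succ]; omega
    · simp only [Fin.forall_fin_succ]; simp; omega
    · intro a b c a' b' c' hdeg h
      simp only [Fin.exists_fin_succ]; simp; omega

theorem exists_isAG_five_six {k : ℕ} (hk : 1 ≤ k) :
    ∃ I : Ideal (MvPolynomial (Fin 3) K), IsAG I ∧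
      ∀ i, hilbFn I i = repSeq [1, 3, 5] 6 k [5, 3, 1] i := by
  have h := exists_isAG_hilbFn_eq_repSeq (K := K) (j := k + 5) (P := fun a b c =>
      a = k + 3 ∧ b = 2 ∧ c = 0 ∨ a = 0 ∧ b = 1 ∧ c = k + 4 ∨ a = 0 ∧ b = k + 5 ∧ c = 0)
    [1, 3, 5] 6 (by omega) ⟨0, _, 0, Or.inr (Or.inr ⟨rfl, rfl, rfl⟩)⟩
    (by simp only [List.length_cons, List.length_nil]; omega) rfl ?_ ?_
  · exact h
  · intro i hi hi2
    simp only [List.length_cons, List.length_nil] at hi2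
    obtain rfl | rfl : i = 1 ∨ i = 2 := by omega
    · rw [hilbFn_monomialForm (ι := Fin 3) ![(1, 0, 0), (0, 1, 0), (0, 0, 1)]
        ![(k + 2, 2, 0), (0, k + 4, 0), (0, 1, k + 3)]]
      · rfl
      · simp [Fin.forall_fin_succ]
      · simp only [Fin.forall_fin_succ]; simp; omega
      · intro a b c a' b' c' hdeg h
        simp only [Fin.exists_fin_succ]; simp; omega
    · rw [hilbFn_monomialForm (ι := Fin 5)
        ![(2, 0, 0), (1, 1, 0), (0, 2, 0), (0, 0, 2), (0, 1, 1)]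
        ![(k + 1, 2, 0), (k + 2, 1, 0), (0, k + 3, 0), (0, 1, k + 2), (0, 0, k + 3)]]
      · rfl
      · simp [Fin.forall_fin_succ]
      · simp only [Fin.forall_fin_succ]; simp; omega
      · intro a b c a' b' c' hdeg h
        simp only [Fin.exists_fin_succ]; simp; omega
  · intro i hi hij
    simp only [List.length_cons, List.length_nil] at hi
    rw [hilbFn_monomialForm (ι := Fin 6)
      ![(i, 0, 0), (i - 1, 1, 0), (i - 2, 2, 0), (0, 0, i), (0, 1, i - 1), (0, i, 0)]
      ![(k + 3 - i, 2, 0), (k + 4 - i, 1, 0), (k + 5 - i, 0, 0), (0, 1, k + 4 - i),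
        (0, 0, k + 5 - i), (0, k + 5 - i, 0)]]
    · rfl
    · simp [Fin.forall_fin_succ]; omega
    · simp only [Fin.forall_fin_succ]; simp; omega
    · intro a b c a' b' c' hdeg h
      simp only [Fin.exists_fin_succ]; simp; omega

theorem exists_isAG_six {k : ℕ} (hk : 1 ≤ k) :
    ∃ I : Ideal (MvPolynomial (Fin 3) K), IsAG I ∧
      ∀ i, hilbFn I i = repSeq [1, 3] 6 k [3, 1] i := by
  have h := exists_isAG_hilbFn_eq_repSeq (K := K) (j := k + 3) (P := fun a b c =>
      a = k + 2 ∧ b = 1 ∧ c = 0 ∨ a = 0 ∧ b = k + 2 ∧ c = 1 ∨ a = 1 ∧ b = 0 ∧ c = k + 2)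
    [1, 3] 6 (by omega) ⟨_, 1, 0, Or.inl ⟨rfl, rfl, rfl⟩⟩
    (by simp only [List.length_cons, List.length_nil]; omega) rfl ?_ ?_
  · exact h
  · intro i hi hi2
    obtain rfl : i = 1 := by simp only [List.length_cons, List.length_nil] at hi2; omega
    rw [hilbFn_monomialForm (ι := Fin 3) ![(1, 0, 0), (0, 1, 0), (0, 0, 1)]
      ![(k + 1, 1, 0), (0, k + 1, 1), (1, 0, k + 1)]]
    · rfl
    · simp [Fin.forall_fin_succ]
    · simp only [Fin.forall_fin_succ]; simp; omega
    · intro a b c a' b' c' hdeg h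
      simp only [Fin.exists_fin_succ]; simp; omega
  · intro i hi hij
    simp only [List.length_cons, List.length_nil] at hi
    rw [hilbFn_monomialForm (ι := Fin 6)
      ![(i, 0, 0), (i - 1, 1, 0), (0, i, 0), (0, i - 1, 1), (0, 0, i), (1, 0, i - 1)]
      ![(k + 2 - i, 1, 0), (k + 3 - i, 0, 0), (0, k + 2 - i, 1), (0, k + 3 - i, 0),
        (1, 0, k + 2 - i), (0, 0, k + 3 - i)]]
    · rfl
    · simp [Fin.forall_fin_succ]; omega
    · simp only [Fin.forall_fin_succ]; simp; omega
    · intro a b c a' b' c' hdeg h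
      simp only [Fin.exists_fin_succ]; simp; omega

theorem HasSmallShape.exists_isAG {T : ℕ → ℕ} (h : HasSmallShape T) :
    ∃ I : Ideal (MvPolynomial (Fin 3) K), IsAG I ∧ ∀ i, hilbFn I i = T i := by
  obtain ⟨k, hk, h⟩ := h
  rcases h with h | h | h | h | h | h | h <;> simp only [h]
  · exact exists_isAG_binary 1 hk [1] rfl le_rfl rfl (by omega)
  · exact exists_isAG_binary 2 hk [1, 3] rfl (by omega) rfl
      (fun i h1 h2 => by interval_cases i; rfl)
  · exact exists_isAG_binary 3 hk [1, 3, 4] rfl (by omega) rfl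
      (fun i h1 h2 => by interval_cases i <;> rfl)
  · exact exists_isAG_binary 4 hk [1, 3, 4, 5] rfl (by omega) rfl
      (fun i h1 h2 => by interval_cases i <;> rfl)
  · exact exists_isAG_five hk
  · exact exists_isAG_five_six hk
  · exact exists_isAG_six hk

theorem listSeq_le {L : List ℕ} {B : ℕ} (h : ∀ x ∈ L, x ≤ B) (i : ℕ) : listSeq L i ≤ B := by
  rw [listSeq, List.getD_eq_getElem?_getD]
  by_cases hi : i < L.length
  · simpa [hi] using h _ (List.getElem_mem hi)
  · simp [hi]

theorem HasSmallShape.apply_one {T : ℕ → ℕ} (h : HasSmallShape T) : T 1 = 3 := by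
  obtain ⟨k, hk, h⟩ := h
  obtain ⟨k, rfl⟩ := Nat.exists_eq_add_of_le' hk
  rcases h with h | h | h | h | h | h | h <;> rw [h] <;> rfl

theorem HasSmallShape.le_six {T : ℕ → ℕ} (h : HasSmallShape T) (i : ℕ) : T i ≤ 6 := by
  obtain ⟨k, hk, h⟩ := h
  rcases h with h | h | h | h | h | h | h <;> rw [h] <;> refine listSeq_le (fun x hx => ?_) i <;>
    simp [List.mem_replicate] at hx <;> omega

/-- the codimension three Gorenstein sequences of Sperner number at
most six are exactly `(1,3^k,1)`, `(1,3,4^k,3,1)`, `(1,3,4,5^k,4,3,1)`,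
`(1,3,4,5,6^k,5,4,3,1)`, `(1,3,5^k,3,1)`, `(1,3,5,6^k,5,3,1)`, `(1,3,6^k,3,1)`
with `k ≥ 1`. -/
theorem stmt4 (T : ℕ → ℕ) :
    ((∃ I : Ideal (MvPolynomial (Fin 3) K), IsAG I ∧ ∀ i, hilbFn I i = T i) ∧
        T 1 = 3 ∧ (∀ i, T i ≤ 6)) ↔
    ∃ k : ℕ, 1 ≤ k ∧
      ((∀ i, T i = repSeq [1] 3 k [1] i) ∨
       (∀ i, T i = repSeq [1, 3] 4 k [3, 1] i) ∨
       (∀ i, T i = repSeq [1, 3, 4] 5 k [4, 3, 1] i) ∨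
       (∀ i, T i = repSeq [1, 3, 4, 5] 6 k [5, 4, 3, 1] i) ∨
       (∀ i, T i = repSeq [1, 3] 5 k [3, 1] i) ∨
       (∀ i, T i = repSeq [1, 3, 5] 6 k [5, 3, 1] i) ∨
       (∀ i, T i = repSeq [1, 3] 6 k [3, 1] i)) := by
  change _ ↔ HasSmallShape T
  constructor
  · rintro ⟨⟨I, hI, hT⟩, h3, h6⟩
    obtain rfl : hilbFn I = T := funext hT
    exact hI.hasSmallShape h3 h6
  · exact fun h => ⟨h.exists_isAG, h.apply_one, h.le_six⟩
end
end

section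
/- Let k be an infinite field of characteristic zero or of characteristic p > k+1, and let B be a graded Artinian Gorenstein algebra with almost constant Hilbert function T(B) = (1, s^k, 1) where the Sperner number s is at most 3, or more generally with k ≥ s + 1. Then B has the strong Lefschetz property. -/
/- Common background: standard graded Artinian (Gorenstein) quotients of a
polynomial ring, their graded pieces, Hilbert function, socle degree,
Lefschetz-type conditions, and Macaulay contraction duality. -/

noncomputable section
open MvPolynomial
open scoped Classical

variable {K : Type*} [Field K] {n : ℕ}

/-- Linear independence of a finite family is preserved by perturbation along a line, with finitely
many exceptions. -/
theorem finite_setOf_not_linearIndependent_add_smul {ι F W : Type*} [Fintype ι] [Field F]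
    [AddCommGroup W] [Module F W] {v : ι → W} (hv : LinearIndependent F v) (v' : ι → W) :
    {t : F | ¬ LinearIndependent F (fun i => v i + t • v' i)}.Finite := by
  obtain ⟨g, hg⟩ := LinearMap.exists_leftInverse_of_injective _ (LinearMap.ker_eq_bot.2 hv)
  have hgv : ∀ i, g (v i) = Finsupp.single i 1 := fun i => by
    simpa using LinearMap.congr_fun hg (Finsupp.single i 1)
  let M : Matrix ι ι (Polynomial F) := Matrix.of fun i j =>
    Polynomial.C (Finsupp.single i (1 : F) j) + Polynomial.X * Polynomial.C (g (v' i) j)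
  have heval : ∀ t, M.det.eval t = (Matrix.of fun i j => g (v i + t • v' i) j).det := by
    intro t
    rw [← Polynomial.coe_evalRingHom, RingHom.map_det]
    congr 1
    ext i j
    simp [M, hgv, mul_comm t]
  have hM : M.det ≠ 0 := by
    intro h
    have h0 := heval 0
    rw [h] at h0
    have : (Matrix.of fun i j => g (v i + (0 : F) • v' i) j) = 1 := by
      ext i j
      simp [hgv, Finsupp.single_apply, Matrix.one_apply]
    rw [this] at h0
    simp at h0
  refine (Polynomial.finite_setOfPred_isRoot hM).subset fun t ht => ?_
  by_contra hroot
  refine ht (LinearIndependent.of_comp ((Finsupp.lcoeFun).comp g) ?_)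
  rw [Set.mem_ofPred_eq, Polynomial.IsRoot, heval] at hroot
  exact Matrix.linearIndependent_rows_of_det_ne_zero hroot

/-- Along a pencil of linear maps the rank drops only finitely often. -/
theorem finite_setOf_finrank_range_lt {F V W : Type*} [Field F] [AddCommGroup V] [Module F V]
    [AddCommGroup W] [Module F W] [FiniteDimensional F W] (S T : V →ₗ[F] W) :
    {t : F | Module.finrank F (LinearMap.range (S + t • T)) <
      Module.finrank F (LinearMap.range S)}.Finite := by
  let b := Module.finBasis F (LinearMap.range S)
  choose c hc using fun i => (b i).2
  have hb : LinearIndependent F (fun i => S (c i)) := by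
    simp only [hc]
    exact b.linearIndependent.map' (LinearMap.range S).subtype (Submodule.ker_subtype _)
  refine (finite_setOf_not_linearIndependent_add_smul hb fun i => T (c i)).subset fun t ht hli => ?_
  rw [Set.mem_ofPred_eq] at ht
  refine absurd ht (not_lt.2 ?_)
  calc Module.finrank F (LinearMap.range S)
      = Module.finrank F (Submodule.span F (Set.range fun i => S (c i) + t • T (c i))) := by
        rw [finrank_span_eq_card hli, Fintype.card_fin]
    _ ≤ _ := Submodule.finrank_mono <| Submodule.span_le.2 <| by
        rintro _ ⟨i, rfl⟩
        exact ⟨c i, rfl⟩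

/-- If the rank of a pencil is maximal at `S`, then a vector lying in all but finitely many of the
ranges of the pencil lies in the range of `S`. -/
theorem mem_range_of_finite_setOf_notMem {F V W : Type*} [Field F] [Infinite F] [AddCommGroup V]
    [Module F V] [AddCommGroup W] [Module F W] [FiniteDimensional F W] {S T : V →ₗ[F] W} {w : W}
    (hmax : ∀ t : F, Module.finrank F (LinearMap.range (S + t • T)) ≤
      Module.finrank F (LinearMap.range S))
    (hw : {t : F | w ∉ LinearMap.range (S + t • T)}.Finite) : w ∈ LinearMap.range S := by
  by_contra hwS
  let S' : V × F →ₗ[F] W := S.coprod (LinearMap.toSpanSingleton F W w)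
  have hS' : LinearMap.range S' = LinearMap.range S ⊔ Submodule.span F {w} := by
    rw [LinearMap.range_coprod, LinearMap.range_toSpanSingleton]
  have hlt : Module.finrank F (LinearMap.range S) < Module.finrank F (LinearMap.range S') := by
    refine Submodule.finrank_lt_finrank_of_lt (lt_of_le_of_ne (hS' ▸ le_sup_left) fun h => hwS ?_)
    rw [h, hS']
    exact Submodule.mem_sup_right (Submodule.mem_span_singleton_self w)
  obtain ⟨t, ht⟩ := Set.Infinite.nonempty
    (hw.union (finite_setOf_finrank_range_lt S' (T.coprod 0))).infinite_compl
  simp only [Set.mem_compl_iff, Set.mem_union, Set.mem_ofPred_eq, not_or, not_not, not_lt] at ht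
  have hle : LinearMap.range (S' + t • T.coprod 0) ≤ LinearMap.range (S + t • T) := by
    rintro _ ⟨⟨x, c⟩, rfl⟩
    have : (S' + t • T.coprod (0 : F →ₗ[F] W)) (x, c) = (S + t • T) x + c • w := by
      simp [S']
      abel
    rw [this]
    exact Submodule.add_mem _ ⟨x, rfl⟩ (Submodule.smul_mem _ _ ht.1)
  exact absurd (ht.2.trans ((Submodule.finrank_mono hle).trans (hmax t))) (not_le.2 hlt)

/-- If a polynomial curve takes values in a subspace for infinitely many parameters, then its
coefficients lie in that subspace. -/
theorem mem_of_sum_pow_smul_mem {F W : Type*} [Field F] [AddCommGroup W] [Module F W]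
    (P : Submodule F W) {S : Set F} (hS : S.Infinite) {N : ℕ} {c : ℕ → W}
    (h : ∀ t ∈ S, ∑ k ∈ Finset.range N, t ^ k • c k ∈ P) {k : ℕ} (hk : k < N) : c k ∈ P := by
  by_contra hck
  obtain ⟨f, hf, hP⟩ := Submodule.exists_le_ker_of_notMem hck
  let p : Polynomial F := ∑ i ∈ Finset.range N, Polynomial.C (f (c i)) * Polynomial.X ^ i
  have hp : p = 0 := by
    refine Polynomial.eq_zero_of_infinite_isRoot p (hS.mono fun t ht => ?_)
    have := hP (h t ht)
    simp only [LinearMap.mem_ker, map_sum, map_smul, smul_eq_mul] at this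
    rw [Set.mem_ofPred_eq, Polynomial.IsRoot]
    refine Eq.trans ?_ this
    simp only [p, Polynomial.eval_finsetSum, Polynomial.eval_mul, Polynomial.eval_C,
      Polynomial.eval_pow, Polynomial.eval_X, mul_comm]
  have : p.coeff k = f (c k) := by
    simp [p, Polynomial.coeff_X_pow, hk]
  rw [hp] at this
  exact hf (by simpa using this.symm)

section Algebra

variable {F A : Type*} [Field F] [CommRing A] [Algebra F A]

theorem add_smul_pow_eq_sum (y z : A) (t : F) (d : ℕ) :
    (y + t • z) ^ d =
      ∑ k ∈ Finset.range (d + 1), t ^ k • ((d.choose k : F) • (z ^ k * y ^ (d - k))) := by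
  rw [add_comm, add_pow]
  refine Finset.sum_congr rfl fun k _ => ?_
  rw [smul_pow, Nat.cast_smul_eq_nsmul, nsmul_eq_mul, smul_mul_assoc, smul_mul_assoc, mul_comm _
    (d.choose k : A)]

/-- The `d`-th power of a subspace is spanned by `d`-th powers when `d!` is invertible. -/
theorem pow_le_span_pow [Infinite F] (V : Submodule F A) (d : ℕ)
    (hd : ∀ k, 1 ≤ k → k ≤ d → (k : F) ≠ 0) :
    V ^ d ≤ Submodule.span F {x | ∃ y ∈ V, y ^ d = x} := by
  induction d with
  | zero =>
    rw [pow_zero, Submodule.one_le]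
    exact Submodule.subset_span ⟨0, V.zero_mem, pow_zero 0⟩
  | succ d ih =>
    rw [pow_succ', Submodule.mul_le]
    intro z hz x hx
    refine (Submodule.span_le (p := (Submodule.span F _).comap (LinearMap.mulLeft F z))).2 ?_
      (ih (fun k h1 h2 => hd k h1 (h2.trans d.le_succ)) hx)
    rintro _ ⟨y, hy, rfl⟩
    have := mem_of_sum_pow_smul_mem (Submodule.span F {x | ∃ y ∈ V, y ^ (d + 1) = x})
      (Set.infinite_univ (α := F)) (N := d + 2) (k := 1)
      (c := fun k => ((d + 1).choose k : F) • (z ^ k * y ^ (d + 1 - k)))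
      (fun t _ => by
        rw [← add_smul_pow_eq_sum]
        exact Submodule.subset_span ⟨_, V.add_mem hy (V.smul_mem t hz), rfl⟩) (by lia)
    rw [Nat.choose_one_right] at this
    simpa using (Submodule.smul_mem_iff _ (hd (d + 1) (by lia) le_rfl)).1 this

/-- Multiplication, with the second argument restricted to a subspace. -/
def mulOn (U : Submodule F A) : A →ₗ[F] U →ₗ[F] A :=
  LinearMap.lcomp F A U.subtype ∘ₗ LinearMap.mul F A

@[simp]
theorem mulOn_apply (U : Submodule F A) (a : A) (u : U) : mulOn U a u = a * u := rfl

theorem mem_range_mulOn {U : Submodule F A} {a w : A} :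
    w ∈ LinearMap.range (mulOn U a) ↔ ∃ u ∈ U, a * u = w := by
  simp

theorem exists_pow_mul_pow_eq {V : Submodule F A} {ℓ y : A} (hℓ : ℓ ∈ V) (hy : y ∈ V) (t : F)
    (d i : ℕ) (hi : i ≤ d + 1) :
    ∃ b ∈ V ^ d, ℓ ^ i * y ^ (d + 1 - i) = (-t) ^ i • y ^ (d + 1) + (ℓ + t • y) * b := by
  induction i with
  | zero => exact ⟨0, Submodule.zero_mem _, by simp⟩
  | succ i ih =>
    obtain ⟨b, hb, h⟩ := ih (by lia)
    obtain ⟨e, rfl⟩ : ∃ e, d = i + e := ⟨d - i, by lia⟩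
    refine ⟨ℓ ^ i * y ^ e - t • b, Submodule.sub_mem _ ?_ (Submodule.smul_mem _ _ hb), ?_⟩
    · rw [pow_add]
      exact Submodule.mul_mem_mul (Submodule.pow_mem_pow _ hℓ _) (Submodule.pow_mem_pow _ hy _)
    · rw [show i + e + 1 - i = e + 1 by lia] at h
      rw [show i + e + 1 - (i + 1) = e by lia]
      simp only [Algebra.smul_def, map_pow, map_neg] at h ⊢
      linear_combination (-algebraMap F A t) * h

/-- If elements of degree below `N` are not in the socle, then degree `i` pairs nondegenerately with
degree `e` whenever `i + e ≤ N`. -/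
theorem eq_zero_of_forall_mul_pow_eq_zero {V : Submodule F A} {N : ℕ}
    (hsoc : ∀ i < N, ∀ a ∈ V ^ i, (∀ v ∈ V, v * a = 0) → a = 0) (e i : ℕ) (hie : i + e ≤ N) {a : A}
    (ha : a ∈ V ^ i) (h : ∀ b ∈ V ^ e, b * a = 0) : a = 0 := by
  induction e generalizing i a with
  | zero => simpa using h 1 (by rw [pow_zero]; exact Submodule.one_le.1 le_rfl)
  | succ e ih =>
    refine hsoc i (by lia) a ha fun v hv => ?_
    refine ih (i + 1) (by lia) (pow_succ' V i ▸ Submodule.mul_mem_mul hv ha) fun b hb => ?_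
    rw [← mul_assoc]
    exact h _ (pow_succ V e ▸ Submodule.mul_mem_mul hb hv)

variable [FiniteDimensional F A]

theorem exists_mulOn_rank_max (V U : Submodule F A) :
    ∃ ℓ ∈ V, ∀ ℓ' ∈ V, Module.finrank F (LinearMap.range (mulOn U ℓ')) ≤
      Module.finrank F (LinearMap.range (mulOn U ℓ)) := by
  let r : A → ℕ := fun ℓ => Module.finrank F (LinearMap.range (mulOn U ℓ))
  have hb : BddAbove (r '' V) := ⟨Module.finrank F A, by
    rintro _ ⟨ℓ, _, rfl⟩
    exact Submodule.finrank_le _⟩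
  obtain ⟨ℓ, hℓ, h⟩ := Nat.sSup_mem (Set.Nonempty.image r ⟨0, V.zero_mem⟩) hb
  exact ⟨ℓ, hℓ, fun ℓ' hℓ' => (le_csSup hb ⟨ℓ', hℓ', rfl⟩).trans h.ge⟩

theorem exists_mul_eq_of_finite [Infinite F] {V U : Submodule F A} {ℓ y w : A} (hℓ : ℓ ∈ V)
    (hy : y ∈ V)
    (hmax : ∀ ℓ' ∈ V, Module.finrank F (LinearMap.range (mulOn U ℓ')) ≤
      Module.finrank F (LinearMap.range (mulOn U ℓ)))
    {S : Set F} (hS : S.Finite) (hw : ∀ t ∉ S, ∃ u ∈ U, (ℓ + t • y) * u = w) :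
    ∃ u ∈ U, ℓ * u = w := by
  rw [← mem_range_mulOn]
  refine mem_range_of_finite_setOf_notMem (T := mulOn U y) (fun t => ?_) (hS.subset fun t ht => ?_)
  · rw [← map_smul, ← map_add]
    exact hmax _ (V.add_mem hℓ (V.smul_mem t hy))
  · by_contra h
    rw [Set.mem_ofPred_eq, ← map_smul, ← map_add, mem_range_mulOn] at ht
    exact ht (hw t h)

/-- Perturbing `ℓ` makes its `j`-th power nonzero without decreasing the rank. -/
theorem exists_pow_ne_zero_rank_le [Infinite F] {V : Submodule F A} (U : Submodule F A) {ℓ : A}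
    (hℓ : ℓ ∈ V) {j : ℕ} (hj : ∀ k, 1 ≤ k → k ≤ j → (k : F) ≠ 0) (hV : V ^ j ≠ ⊥) :
    ∃ ℓ' ∈ V, ℓ' ^ j ≠ 0 ∧ Module.finrank F (LinearMap.range (mulOn U ℓ)) ≤
      Module.finrank F (LinearMap.range (mulOn U ℓ')) := by
  obtain ⟨z, hz, hzj⟩ : ∃ z ∈ V, z ^ j ≠ 0 := by
    by_contra! h
    refine hV (eq_bot_iff.2 ((pow_le_span_pow V j hj).trans (Submodule.span_le.2 ?_)))
    rintro _ ⟨y, hy, rfl⟩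
    exact h y hy
  by_contra! h
  have hfin := finite_setOf_finrank_range_lt (mulOn U ℓ) (mulOn U z)
  refine hzj ?_
  have := mem_of_sum_pow_smul_mem (⊥ : Submodule F A) hfin.infinite_compl (N := j + 1) (k := j)
    (c := fun k => (j.choose k : F) • (z ^ k * ℓ ^ (j - k))) (fun t ht => ?_) j.lt_succ_self
  · simpa using this
  · rw [← add_smul_pow_eq_sum, Submodule.mem_bot]
    by_contra h0
    refine ht ?_
    rw [Set.mem_ofPred_eq, ← map_smul, ← map_add]
    exact h _ (V.add_mem hℓ (V.smul_mem t hz)) h0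

/-- A special case of Green's hyperplane restriction theorem: if `V ^ (d + 1)` has dimension at most
`d + 1`, then it is contained in a principal ideal generated by an element of `V`. -/
theorem exists_mul_eq_of_finrank_pow_le [Infinite F] (V : Submodule F A) (d : ℕ)
    (hd : ∀ k, 1 ≤ k → k ≤ d + 1 → (k : F) ≠ 0)
    (hV : Module.finrank F ↥(V ^ (d + 1)) ≤ d + 1) :
    ∃ ℓ ∈ V, ∀ w ∈ V ^ (d + 1), ∃ u ∈ V ^ d, ℓ * u = w := by
  obtain ⟨ℓ, hℓ, hmax⟩ := exists_mulOn_rank_max V (V ^ d)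
  refine ⟨ℓ, hℓ, fun w hw => mem_range_mulOn.1 (?_ : w ∈ LinearMap.range (mulOn (V ^ d) ℓ))⟩
  refine Submodule.span_le.2 ?_ (pow_le_span_pow V (d + 1) hd hw)
  rintro _ ⟨y, hy, rfl⟩
  refine mem_range_mulOn.2 ?_
  let v : Fin (d + 2) → ↥(V ^ (d + 1)) := fun i => ⟨ℓ ^ (i : ℕ) * y ^ (d + 1 - i), by
    have : V ^ (d + 1) = V ^ (i : ℕ) * V ^ (d + 1 - i) := by
      rw [← pow_add]
      congr 1
      lia
    rw [this]
    exact Submodule.mul_mem_mul (Submodule.pow_mem_pow _ hℓ _) (Submodule.pow_mem_pow _ hy _)⟩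
  have hdep : ¬ LinearIndependent F v := fun h => by
    have := h.fintype_card_le_finrank
    rw [Fintype.card_fin] at this
    lia
  obtain ⟨g, hg, i₀, hi₀⟩ := Fintype.not_linearIndependent_iff.1 hdep
  let p : Polynomial F := ∑ i : Fin (d + 2), Polynomial.C (g i) * Polynomial.X ^ (i : ℕ)
  have hp : p ≠ 0 := fun h => hi₀ <| by
    have : p.coeff i₀ = g i₀ := by
      simp [p, Polynomial.coeff_X_pow, Fin.val_inj]
    rw [← this, h, Polynomial.coeff_zero]
  refine exists_mul_eq_of_finite hℓ hy hmax
    (Set.Finite.preimage (f := fun t : F => -t) neg_injective.injOn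
      (Polynomial.finite_setOfPred_isRoot hp)) fun t ht => ?_
  have ht : p.eval (-t) ≠ 0 := ht
  choose b hb h using fun i : Fin (d + 2) => exists_pow_mul_pow_eq hℓ hy t d i (by lia)
  have hsum : p.eval (-t) • y ^ (d + 1) + (ℓ + t • y) * ∑ i, g i • b i = 0 := by
    have hg' : ∑ i, g i • (ℓ ^ (i : ℕ) * y ^ (d + 1 - i)) = 0 := by
      simpa [v] using congrArg Subtype.val hg
    rw [← hg']
    simp only [h, smul_add, Finset.sum_add_distrib, Finset.mul_sum, p, Polynomial.eval_finsetSum,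
      Finset.sum_smul, Polynomial.eval_mul, Polynomial.eval_C, Polynomial.eval_pow,
      Polynomial.eval_X, mul_smul, mul_smul_comm]
  refine ⟨-(p.eval (-t))⁻¹ • ∑ i, g i • b i, Submodule.smul_mem _ _
    (Submodule.sum_mem _ fun i _ => Submodule.smul_mem _ _ (hb i)), ?_⟩
  rw [mul_smul_comm, eq_neg_of_add_eq_zero_right hsum, neg_smul_neg, smul_smul, inv_mul_cancel₀ ht,
    one_smul]

/-- The ternary cubic case: a three-dimensional space `V` with nondegenerate products admits an
element multiplying injectively on `V`. -/
theorem exists_forall_mul_eq_zero_of_finrank_eq_three [Infinite F] (V : Submodule F A)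
    (hF : ∀ k : ℕ, 1 ≤ k → k ≤ 3 → (k : F) ≠ 0) (hV : Module.finrank F V = 3) (hV3 : V ^ 3 ≠ ⊥)
    (h1 : ∀ a ∈ V, (∀ v ∈ V, v * a = 0) → a = 0)
    (h2 : ∀ a ∈ V ^ 2, (∀ v ∈ V, v * a = 0) → a = 0) :
    ∃ ℓ ∈ V, ∀ a ∈ V, ℓ * a = 0 → a = 0 := by
  obtain ⟨ℓ₀, hℓ₀, hmax₀⟩ := exists_mulOn_rank_max V V
  obtain ⟨ℓ, hℓ, hℓ3, hle⟩ := exists_pow_ne_zero_rank_le V hℓ₀ hF hV3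
  have hmax := fun ℓ' hℓ' => (hmax₀ ℓ' hℓ').trans hle
  by_contra! hcon
  obtain ⟨a, ha, hℓa, ha0⟩ := hcon ℓ hℓ
  have haa : a * a = 0 := by
    refine h2 _ (pow_two V ▸ Submodule.mul_mem_mul ha ha) fun y hy => ?_
    obtain ⟨u, -, hu⟩ := exists_mul_eq_of_finite (w := y * a) hℓ hy hmax (Set.finite_singleton 0)
      fun t ht => ⟨t⁻¹ • a, V.smul_mem _ ha, by
        rw [mul_smul_comm, add_mul, hℓa, zero_add, smul_mul_assoc, smul_smul,
          inv_mul_cancel₀ ht, one_smul]⟩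
    linear_combination u * hℓa - a * hu
  obtain ⟨z, hz, hza⟩ : ∃ z ∈ V, z * a ≠ 0 := by
    by_contra! h
    exact ha0 (h1 a ha h)
  have hli : LinearIndependent F ![a, ℓ, z] := by
    rw [Fintype.linearIndependent_iff]
    intro g hg
    simp only [Fin.sum_univ_three, Matrix.cons_val] at hg
    have hg2 : g 2 = 0 := by
      refine (smul_eq_zero.1 (?_ : g 2 • (z * a) = 0)).resolve_right hza
      simp only [Algebra.smul_def] at hg ⊢
      linear_combination a * hg - algebraMap F A (g 0) * haa - algebraMap F A (g 1) * hℓa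
    have hg1 : g 1 = 0 := by
      refine (smul_eq_zero.1 (?_ : g 1 • ℓ ^ 3 = 0)).resolve_right hℓ3
      simp only [hg2, Algebra.smul_def, map_zero] at hg ⊢
      linear_combination ℓ ^ 2 * hg - algebraMap F A (g 0) * ℓ * hℓa
    have hg0 : g 0 = 0 := by
      rw [hg1, hg2, zero_smul, zero_smul, add_zero, add_zero] at hg
      exact (smul_eq_zero.1 hg).resolve_right ha0
    intro i
    fin_cases i
    exacts [hg0, hg1, hg2]
  have hspan : Submodule.span F (Set.range ![a, ℓ, z]) = V := by
    refine Submodule.eq_of_le_of_finrank_eq (Submodule.span_le.2 ?_) ?_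
    · rintro _ ⟨i, rfl⟩
      fin_cases i
      exacts [ha, hℓ, hz]
    · rw [finrank_span_eq_card hli, Fintype.card_fin, hV]
  have hrep : ∀ v ∈ V, ∃ x y w : F, v = x • a + y • ℓ + w • z := by
    intro v hv
    rw [← hspan, Submodule.mem_span_range_iff_exists_fun] at hv
    obtain ⟨c, hc⟩ := hv
    exact ⟨c 0, c 1, c 2, by simpa [Fin.sum_univ_three] using hc.symm⟩
  have hzza : z * (z * a) ≠ 0 := by
    refine fun h => hza (h2 _ (pow_two V ▸ Submodule.mul_mem_mul hz ha) fun v hv => ?_)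
    obtain ⟨x, y, w, rfl⟩ := hrep v hv
    simp only [Algebra.smul_def]
    linear_combination algebraMap F A x * z * haa + algebraMap F A y * z * hℓa +
      algebraMap F A w * h
  obtain ⟨t, ht, hℓt⟩ : ∃ t : F, t ≠ 0 ∧ ℓ ^ 3 + t • (z * ℓ ^ 2) ≠ 0 := by
    by_cases h : ℓ ^ 3 + z * ℓ ^ 2 = 0
    · refine ⟨-1, neg_ne_zero.2 one_ne_zero, fun h' => hℓ3 ?_⟩
      rw [neg_smul, one_smul] at h'
      refine (smul_eq_zero.1 (?_ : (2 : F) • ℓ ^ 3 = 0)).resolve_left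
        (by simpa using hF 2 (by lia) (by lia))
      rw [two_smul]
      linear_combination h + h'
    · exact ⟨1, one_ne_zero, by rwa [one_smul]⟩
  obtain ⟨b, hb, hb', hb0⟩ := hcon (ℓ + t • z) (V.add_mem hℓ (V.smul_mem t hz))
  obtain ⟨x, y, w, rfl⟩ := hrep b hb
  have hw : w = 0 := by
    have : (t * w) • (z * (z * a)) = 0 := by
      simp only [Algebra.smul_def, map_mul] at hb' ⊢
      linear_combination a * hb' - (algebraMap F A x * a + algebraMap F A y * ℓ +
        algebraMap F A w * z) * hℓa - algebraMap F A t * algebraMap F A x * z * haa -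
        algebraMap F A t * algebraMap F A y * z * hℓa
    exact (mul_eq_zero.1 ((smul_eq_zero.1 this).resolve_right hzza)).resolve_left ht
  subst hw
  have hy : y = 0 := by
    refine (smul_eq_zero.1 (?_ : y • (ℓ ^ 3 + t • (z * ℓ ^ 2)) = 0)).resolve_right hℓt
    simp only [Algebra.smul_def, map_zero] at hb' ⊢
    linear_combination ℓ * hb' - algebraMap F A x * (ℓ + algebraMap F A t * z) * hℓa
  subst hy
  have hx : x = 0 := by
    have : (t * x) • (z * a) = 0 := by
      simp only [Algebra.smul_def, map_mul, map_zero] at hb' ⊢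
      linear_combination hb' - algebraMap F A x * hℓa
    exact (mul_eq_zero.1 ((smul_eq_zero.1 this).resolve_right hza)).resolve_left ht
  exact hb0 (by simp [hx])

/-- In the almost constant case there is an element of `V` multiplying injectively on `V`. -/
theorem exists_forall_mul_eq_zero [Infinite F] (V : Submodule F A) (s m : ℕ) (hm : 2 ≤ m)
    (hF : ∀ k, 1 ≤ k → k ≤ m + 1 → (k : F) ≠ 0)
    (hmid : ∀ i, 1 ≤ i → i ≤ m → Module.finrank F ↥(V ^ i) = s) (htop : V ^ (m + 1) ≠ ⊥)
    (hsoc : ∀ i < m + 1, ∀ a ∈ V ^ i, (∀ v ∈ V, v * a = 0) → a = 0)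
    (hcase : s ≤ 3 ∨ s + 1 ≤ m) :
    ∃ ℓ ∈ V, ∀ a ∈ V, ℓ * a = 0 → a = 0 := by
  by_cases hsm : s ≤ m
  · obtain _ | d := s
    · have := Submodule.finrank_eq_zero.1 (hmid 1 le_rfl (by lia))
      rw [pow_one] at this
      exact ⟨0, V.zero_mem, fun a ha _ => by simpa [this] using ha⟩
    · obtain ⟨ℓ, hℓ, h⟩ := exists_mul_eq_of_finrank_pow_le V d (fun k h1 h2 => hF k h1 (by lia))
        (hmid (d + 1) (by lia) hsm).le
      refine ⟨ℓ, hℓ, fun a ha hℓa => ?_⟩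
      refine eq_zero_of_forall_mul_pow_eq_zero hsoc (d + 1) 1 (by lia) (by rwa [pow_one])
        fun b hb => ?_
      obtain ⟨u, -, rfl⟩ := h b hb
      linear_combination u * hℓa
  · obtain ⟨rfl, rfl⟩ : s = 3 ∧ m = 2 := by lia
    exact exists_forall_mul_eq_zero_of_finrank_eq_three V hF
      (by rw [← hmid 1 le_rfl (by lia), pow_one]) htop
      (by simpa using hsoc 1 (by lia)) (hsoc 2 (by lia))

/-- The strong Lefschetz property in the almost constant case, in terms of powers of the degree-one
piece `V`. -/
theorem exists_pow_ne_zero_and_surjective [Infinite F] (V : Submodule F A) (s m : ℕ)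
    (hF : ∀ k, 1 ≤ k → k ≤ m + 1 → (k : F) ≠ 0)
    (hmid : ∀ i, 1 ≤ i → i ≤ m → Module.finrank F ↥(V ^ i) = s) (htop : V ^ (m + 1) ≠ ⊥)
    (hsoc : ∀ i < m + 1, ∀ a ∈ V ^ i, (∀ v ∈ V, v * a = 0) → a = 0)
    (hcase : s ≤ 3 ∨ s + 1 ≤ m) :
    ∃ ℓ ∈ V, ℓ ^ (m + 1) ≠ 0 ∧
      ∀ e i, 1 ≤ i → i + e ≤ m → ∀ w ∈ V ^ (i + e), ∃ u ∈ V ^ i, ℓ ^ e * u = w := by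
  by_cases hm : 2 ≤ m
  · obtain ⟨ℓ₀, hℓ₀, hinj⟩ := exists_forall_mul_eq_zero V s m hm hF hmid htop hsoc hcase
    obtain ⟨ℓ, hℓ, hpow, hle⟩ := exists_pow_ne_zero_rank_le V hℓ₀ hF htop
    refine ⟨ℓ, hℓ, hpow, ?_⟩
    have hinj' : Function.Injective (mulOn V ℓ₀) := by
      rw [← LinearMap.ker_eq_bot, LinearMap.ker_eq_bot']
      exact fun u hu => Subtype.ext (hinj u u.2 hu)
    rw [LinearMap.finrank_range_of_inj hinj'] at hle
    have hrange : LinearMap.range (mulOn V ℓ) = V ^ 2 := by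
      refine Submodule.eq_of_le_of_finrank_le ?_ ?_
      · rintro _ ⟨u, rfl⟩
        exact pow_two V ▸ Submodule.mul_mem_mul hℓ u.2
      · rw [hmid 2 (by lia) hm, ← hmid 1 le_rfl (by lia), pow_one]
        exact hle
    have hstep : ∀ i, ∀ w ∈ V ^ (i + 2), ∃ u ∈ V ^ (i + 1), ℓ * u = w := by
      intro i w hw
      rw [pow_add, ← hrange] at hw
      induction hw using Submodule.mul_induction_on' with
      | mem_mul_mem x hx y hy =>
        obtain ⟨u, rfl⟩ := hy
        refine ⟨x * u, pow_succ V i ▸ Submodule.mul_mem_mul hx u.2, ?_⟩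
        rw [mulOn_apply]
        ring
      | add x _ y _ hx hy =>
        obtain ⟨u, hu, rfl⟩ := hx
        obtain ⟨u', hu', rfl⟩ := hy
        exact ⟨u + u', Submodule.add_mem _ hu hu', mul_add _ _ _⟩
    intro e
    induction e with
    | zero => exact fun i _ _ w hw => ⟨w, hw, by rw [pow_zero, one_mul]⟩
    | succ e ih =>
      intro i hi hie w hw
      obtain ⟨u, hu, rfl⟩ := ih (i + 1) (by lia) (by lia) w (by rwa [add_right_comm])
      obtain ⟨i, rfl⟩ := Nat.exists_eq_add_of_le' hi
      obtain ⟨u', hu', rfl⟩ := hstep i u hu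
      exact ⟨u', hu', by rw [pow_succ, mul_assoc]⟩
  · obtain ⟨ℓ, hℓ, hpow, -⟩ := exists_pow_ne_zero_rank_le V V.zero_mem hF htop
    refine ⟨ℓ, hℓ, hpow, fun e i hi hie w hw => ?_⟩
    obtain rfl : e = 0 := by lia
    exact ⟨w, hw, by rw [pow_zero, one_mul]⟩

end Algebra

theorem gradedPiece_eq_pow (I : Ideal (MvPolynomial (Fin n) K)) (i : ℕ) :
    gradedPiece I i = gradedPiece I 1 ^ i := by
  rw [gradedPiece, gradedPiece, ← homogeneousSubmodule_one_pow, Submodule.map_pow]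

theorem one_mem_gradedPiece_zero (I : Ideal (MvPolynomial (Fin n) K)) : 1 ∈ gradedPiece I 0 :=
  ⟨1, isHomogeneous_one _ _, rfl⟩

theorem mul_mem_gradedPiece {I : Ideal (MvPolynomial (Fin n) K)} {i j : ℕ}
    {a b : MvPolynomial (Fin n) K ⧸ I} (ha : a ∈ gradedPiece I i) (hb : b ∈ gradedPiece I j) :
    a * b ∈ gradedPiece I (i + j) := by
  obtain ⟨p, hp, rfl⟩ := ha
  obtain ⟨q, hq, rfl⟩ := hb
  exact ⟨p * q, IsHomogeneous.mul hp hq, rfl⟩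

theorem pow_mem_gradedPiece {I : Ideal (MvPolynomial (Fin n) K)}
    {ℓ : MvPolynomial (Fin n) K ⧸ I} (hℓ : ℓ ∈ gradedPiece I 1) (d : ℕ) :
    ℓ ^ d ∈ gradedPiece I d := by
  rw [gradedPiece_eq_pow]
  exact Submodule.pow_mem_pow _ hℓ _

theorem IsHomogIdeal.disjoint_gradedPiece {I : Ideal (MvPolynomial (Fin n) K)}
    (hI : IsHomogIdeal I) {i j : ℕ} (hij : i ≠ j) :
    Disjoint (gradedPiece I i) (gradedPiece I j) := by
  rw [Submodule.disjoint_def]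
  rintro _ ⟨p, hp, rfl⟩ ⟨q, hq, hqp⟩
  have hmem : q - p ∈ I := Ideal.Quotient.eq.1 hqp
  have := hI _ hmem i
  rw [map_sub, homogeneousComponent_of_mem hq, homogeneousComponent_of_mem hp, if_neg hij,
    if_pos rfl, zero_sub, neg_mem_iff] at this
  exact Ideal.Quotient.eq_zero_iff_mem.2 this

/-- In an Artinian Gorenstein algebra of socle degree `N`, no nonzero element of degree below `N` is
killed by all linear forms. -/
theorem eq_zero_of_mem_gradedPiece_of_lt {I : Ideal (MvPolynomial (Fin n) K)} (hI : IsAG I) {N : ℕ}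
    (htop : hilbFn I N = 1) (hvan : hilbFn I (N + 1) = 0) {i : ℕ} (hi : i < N) :
    ∀ a ∈ gradedPiece I i, (∀ v ∈ gradedPiece I 1, v * a = 0) → a = 0 := by
  intro a ha h
  have := hI.2.2.1
  have hX : ∀ v, Ideal.Quotient.mk I (X v) ∈ gradedPiece I 1 := fun v =>
    ⟨X v, isHomogeneous_X K v, rfl⟩
  have hle : gradedPiece I N ≤ socleSub I := by
    intro w hw
    simp only [socleSub, Submodule.mem_iInf, LinearMap.mem_ker, LinearMap.mulLeft_apply]
    intro v
    have hmul : Ideal.Quotient.mk I (X v) * w ∈ gradedPiece I (N + 1) :=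
      add_comm 1 N ▸ mul_mem_gradedPiece (hX v) hw
    rwa [Submodule.finrank_eq_zero.1 hvan, Submodule.mem_bot] at hmul
  have heq : gradedPiece I N = socleSub I :=
    Submodule.eq_of_le_of_finrank_eq hle (htop.trans hI.2.2.2.symm)
  refine Submodule.disjoint_def.1 (hI.1.disjoint_gradedPiece hi.ne) a ha ?_
  rw [heq]
  simp only [socleSub, Submodule.mem_iInf, LinearMap.mem_ker, LinearMap.mulLeft_apply]
  exact fun v => h _ (hX v)

/-- Between graded pieces of equal dimension, surjectivity of multiplication by `ℓ ^ d` suffices for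
bijectivity. -/
theorem powMulBij_of_surjective {I : Ideal (MvPolynomial (Fin n) K)}
    [FiniteDimensional K (MvPolynomial (Fin n) K ⧸ I)] {ℓ : MvPolynomial (Fin n) K ⧸ I}
    (hℓ : ℓ ∈ gradedPiece I 1) {d u v : ℕ} (huv : u + d = v) (hdim : hilbFn I u = hilbFn I v)
    (hsurj : ∀ b ∈ gradedPiece I v, ∃ a ∈ gradedPiece I u, ℓ ^ d * a = b) :
    PowMulBij I ℓ d u v := by
  refine ⟨?_, hsurj⟩
  have hmaps : ∀ a ∈ gradedPiece I u, LinearMap.mulLeft K (ℓ ^ d) a ∈ gradedPiece I v := by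
    intro a ha
    rw [← huv, add_comm]
    exact mul_mem_gradedPiece (pow_mem_gradedPiece hℓ d) ha
  let T := (LinearMap.mulLeft K (ℓ ^ d)).restrict hmaps
  have hT : Function.Surjective T := by
    rintro ⟨b, hb⟩
    obtain ⟨a, ha, hab⟩ := hsurj b hb
    exact ⟨⟨a, ha⟩, Subtype.ext hab⟩
  have hTi := (LinearMap.injective_iff_surjective_of_finrank_eq_finrank hdim).2 hT
  intro a ha h
  have : (⟨a, ha⟩ : gradedPiece I u) = 0 := hTi (Subtype.ext (by simpa [T] using h))
  exact congrArg Subtype.val this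

/-- let `K` have characteristic zero or be infinite of characteristic
`p > m + 1`, and let `B = R/I` be a graded Artinian Gorenstein algebra with almost
constant Hilbert function `(1, s^m, 1)` (socle degree `j = m + 1`), where the
Sperner number satisfies `s ≤ 3`, or more generally `m ≥ s + 1`. Then `B` has the
strong Lefschetz property. -/
theorem stmt9 (I : Ideal (MvPolynomial (Fin n) K)) (s m : ℕ) (hm : 1 ≤ m)
    (hchar : CharZero K ∨ (Infinite K ∧ m + 1 < ringChar K))
    (hAG : IsAG I)
    (h0 : hilbFn I 0 = 1) (hmid : ∀ i, 1 ≤ i → i ≤ m → hilbFn I i = s)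
    (htop : hilbFn I (m + 1) = 1) (hvan : ∀ i, m + 1 < i → hilbFn I i = 0)
    (hcase : s ≤ 3 ∨ s + 1 ≤ m) :
    StrongLefschetz I := by
  have hinf : Infinite K := by
    rcases hchar with h | h
    · infer_instance
    · exact h.1
  have hF : ∀ k : ℕ, 1 ≤ k → k ≤ m + 1 → (k : K) ≠ 0 := by
    intro k h1 h2
    rcases hchar with h | h
    · exact Nat.cast_ne_zero.2 (by lia)
    · rw [Ne, ringChar.spec]
      exact fun hdvd => absurd (Nat.le_of_dvd h1 hdvd) (by lia)
  have := hAG.2.2.1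
  have hdeg : socDeg I = m + 1 := by
    refine IsGreatest.csSup_eq ⟨?_, fun i hi => ?_⟩
    · rw [Set.mem_ofPred_eq, htop]
      exact one_ne_zero
    · rw [Set.mem_ofPred_eq] at hi
      by_contra h
      exact hi (hvan i (not_le.1 h))
  have hsoc := fun i (hi : i < m + 1) => eq_zero_of_mem_gradedPiece_of_lt hAG htop
    (hvan (m + 2) (by lia)) hi
  have htop' : gradedPiece I 1 ^ (m + 1) ≠ ⊥ := by
    rw [← gradedPiece_eq_pow]
    intro h
    rw [hilbFn, h, finrank_bot] at htop
    exact zero_ne_one htop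
  obtain ⟨ℓ, hℓ, hpow, hsurj⟩ := exists_pow_ne_zero_and_surjective (gradedPiece I 1) s m hF
    (fun i h1 h2 => by rw [← gradedPiece_eq_pow, ← hmid i h1 h2, hilbFn]) htop'
    (fun i hi => by simpa only [← gradedPiece_eq_pow] using hsoc i hi) hcase
  simp only [← gradedPiece_eq_pow] at hsurj
  refine ⟨ℓ, hℓ, fun i hi => ?_⟩
  rw [hdeg] at hi ⊢
  obtain ⟨e, he⟩ : ∃ e, m + 1 = e + 2 * i := ⟨m + 1 - 2 * i, by lia⟩
  rw [show m + 1 - 2 * i = e by lia, show m + 1 - i = i + e by lia]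
  obtain rfl | hi0 := Nat.eq_zero_or_pos i
  · obtain rfl : e = m + 1 := by lia
    rw [zero_add]
    refine powMulBij_of_surjective hℓ (zero_add _) (h0.trans htop.symm) fun b hb => ?_
    have hmem := pow_mem_gradedPiece hℓ (m + 1)
    obtain ⟨c, hc⟩ := (finrank_eq_one_iff_of_nonzero' (⟨_, hmem⟩ : gradedPiece I (m + 1))
      (by simpa using hpow)).1 htop ⟨b, hb⟩
    refine ⟨c • 1, Submodule.smul_mem _ _ (one_mem_gradedPiece_zero I), ?_⟩
    rw [mul_smul_comm, mul_one]
    exact congrArg Subtype.val hc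
  · exact powMulBij_of_surjective hℓ rfl
      ((hmid i hi0 (by lia)).trans (hmid (i + e) (by lia) (by lia)).symm)
      (hsurj e i hi0 (by lia))
end
end
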